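/- Let S be an infinite set of natural numbers, each at least 5. Then there is no algorithm that, given a finite presentation, decides whether or not the group presented has infinitely many quotients among the alternating groups {Alt(n) : n ∈ S}. Formally: the predicate on encoded finite presentations (s, L) given by 'the set {n ∈ S : there exists a surjective group homomorphism from the presented group P(s,L) onto Alt(n)} is infinite' is not a computable predicate (¬ ComputablePred). -/

import Mathlib

/-- The codes for each number of generators form a denumerable type. -/
instance (s : ℕ) : Denumerable (List (List (Fin s × Bool))) :=
  Denumerable.ofEncodableOfInfinite _

/-- The group presented by a finite presentation encoded as `(s, L)`, where `s` is the number
of generators and each entry of `L` is a word in the generators and their inverses. -/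
def presentedGroupOf (p : Σ s : ℕ, List (List (Fin s × Bool))) : Type :=
  PresentedGroup {x : FreeGroup (Fin p.1) | ∃ w ∈ p.2, x = FreeGroup.mk w}

instance (p : Σ s : ℕ, List (List (Fin s × Bool))) : Group (presentedGroupOf p) := by
  unfold presentedGroupOf; infer_instance

namespace AltUndec

/-! ### Part 0: the encoding -/

/-- number of canonical codes below `m` -/
def rankCode (β : Type) [Primcodable β] (m : ℕ) : ℕ :=
  (List.range m).countP (fun k => decide (Encodable.encode (Encodable.decode (α := β) k) = k + 1))

theorem rankCode_primrec (β : Type) [Primcodable β] : Primrec (rankCode β) := by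
  have h : Primrec (fun m : ℕ => Nat.rec (motive := fun _ => ℕ) 0
      (fun k ih => ih + (if Encodable.encode (Encodable.decode (α := β) k) = k + 1 then 1 else 0)) m) := by
    refine Primrec.nat_rec₁ 0 ?_
    refine Primrec.nat_add.comp Primrec.snd ?_
    refine Primrec.ite ?_ (Primrec.const 1) (Primrec.const 0)
    refine Primrec.eq.comp ?_ (Primrec.succ.comp Primrec.fst)
    exact (Primrec.encode.comp Primrec.decode).comp Primrec.fst
  refine h.of_eq fun m => ?_
  induction m with
  | zero => rfl
  | succ m ih =>
    simp only [rankCode] at ih ⊢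
    rw [ih, List.range_succ, List.countP_append]
    simp [List.countP_cons]

theorem mem_range_encode_iff (β : Type) [Primcodable β] (k : ℕ) :
    k ∈ Set.range (Encodable.encode : β → ℕ) ↔
      Encodable.encode (Encodable.decode (α := β) k) = k + 1 := by
  constructor
  · rintro ⟨b, rfl⟩
    simp
  · intro h
    cases hd : (Encodable.decode k : Option β) with
    | none => rw [hd] at h; simp at h
    | some b => rw [hd] at h; exact ⟨b, by simpa using h⟩

theorem encode_ofInfinite (β : Type) [Primcodable β] [Infinite β] (b : β) :
    (Denumerable.ofEncodableOfInfinite β).toEncodable.encode b = rankCode β (Encodable.encode b) := by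
  classical
  have : (Denumerable.ofEncodableOfInfinite β).toEncodable.encode b =
    (List.range (Encodable.encode b)).countP (fun k => @decide (k ∈ Set.range (Encodable.encode : β → ℕ)) (Encodable.decidableRangeEncode β k)) := rfl
  rw [this, rankCode]
  refine List.countP_congr fun k _ => ?_
  simp only [decide_eq_true_eq]
  exact mem_range_encode_iff β k

/-- the canonical list encoding -/
abbrev lp (s : ℕ) : Primcodable (List (List (Fin s × Bool))) :=
  @Primcodable.list (List (Fin s × Bool)) Primcodable.list

theorem computable_sigma (s : ℕ) (f : ℕ → List (List (Fin s × Bool)))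
    (hf : @Computable _ _ _ (lp s) f) :
    Computable (fun n => (⟨s, f n⟩ : Σ s : ℕ, List (List (Fin s × Bool)))) := by
  rw [← Computable.encode_iff]
  have h1 : ∀ n, @Encodable.encode _ (Primcodable.ofDenumerable
      (Σ s : ℕ, List (List (Fin s × Bool)))).toEncodable ⟨s, f n⟩ =
      Nat.pair s (@rankCode (List (List (Fin s × Bool))) (lp s)
        (@Encodable.encode (List (List (Fin s × Bool))) (lp s).toEncodable (f n))) := by
    intro n
    exact congrArg (Nat.pair s) (@encode_ofInfinite _ (lp s) _ (f n))
  refine Computable.of_eq ?_ (fun n => (h1 n).symm)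
  refine (Primrec₂.natPair.to_comp).comp (Computable.const s) ?_
  refine ((@rankCode_primrec _ (lp s)).to_comp).comp ?_
  exact (@Computable.encode_iff _ _ _ (lp s) f).2 hf

end AltUndec

namespace AltUndec
/-! ### Part 1: machines with several stacks and an undecidable problem -/

/-- A deterministic machine with stacks indexed by `K`. -/
structure Mach (Q K A : Type) where
  kk : Q → K
  dl : Q → A → Q × List A
  q0 : Q
  acc : Q
  rej : Q
  main : K
  a0 : A
  base : K → List A

/-- One step of the machine. -/
def Mach.Step {Q K A : Type} [DecidableEq K] (M : Mach Q K A)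
    (c d : Q × (K → List A)) : Prop :=
  c.1 ≠ M.acc ∧ c.1 ≠ M.rej ∧ ∃ a t, c.2 (M.kk c.1) = a :: t ∧
    d = ((M.dl c.1 a).1, Function.update c.2 (M.kk c.1) ((M.dl c.1 a).2 ++ t))

/-- The initial configuration. -/
def Mach.initCfg {Q K A : Type} [DecidableEq K] (M : Mach Q K A) (n : ℕ) : Q × (K → List A) :=
  (M.q0, Function.update M.base M.main (List.replicate n M.a0 ++ M.base M.main))

def Mach.Reaches {Q K A : Type} [DecidableEq K] (M : Mach Q K A) :=
  Relation.ReflTransGen M.Step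

/-- Restriction to a finite set of states. -/
theorem Mach.restrict {Q K A : Type} [DecidableEq K] (M : Mach Q K A) (F : Set Q)
    (h0 : M.q0 ∈ F) (ha : M.acc ∈ F) (hr : M.rej ∈ F) (hne : M.acc ≠ M.rej)
    (hF : ∀ q ∈ F, ∀ a, (M.dl q a).1 ∈ F) :
    ∃ N : Mach F K A, N.acc ≠ N.rej ∧
      (∀ n, (∃ S, M.Reaches (M.initCfg n) (M.acc, S)) → ∃ S, N.Reaches (N.initCfg n) (N.acc, S)) ∧
      (∀ n, (∃ S, M.Reaches (M.initCfg n) (M.rej, S)) → ∃ S, N.Reaches (N.initCfg n) (N.rej, S)) := by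
  let N : Mach F K A :=
    { kk := fun q => M.kk q
      dl := fun q a => (⟨(M.dl q a).1, hF q q.2 a⟩, (M.dl q a).2)
      q0 := ⟨_, h0⟩
      acc := ⟨_, ha⟩
      rej := ⟨_, hr⟩
      main := M.main
      a0 := M.a0
      base := M.base }
  have key : ∀ n d, M.Reaches (M.initCfg n) d → ∃ h : d.1 ∈ F, N.Reaches (N.initCfg n) (⟨d.1, h⟩, d.2) := by
    intro n d h
    induction h with
    | refl => exact ⟨h0, Relation.ReflTransGen.refl⟩
    | tail _ hs ih =>
      obtain ⟨hb, ih⟩ := ih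
      obtain ⟨h1, h2, a, t, h3, rfl⟩ := hs
      refine ⟨hF _ hb _, ih.tail ⟨?_, ?_, a, t, h3, rfl⟩⟩
      · intro h; exact h1 (congrArg Subtype.val h)
      · intro h; exact h2 (congrArg Subtype.val h)
  refine ⟨N, ?_, ?_, ?_⟩
  · intro h; exact hne (congrArg Subtype.val h)
  · rintro n ⟨S, hS⟩
    obtain ⟨_, h⟩ := key n _ hS
    exact ⟨S, h⟩
  · rintro n ⟨S, hS⟩
    obtain ⟨_, h⟩ := key n _ hS
    exact ⟨S, h⟩

open Turing Turing.PartrecToTM2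

abbrev St := TM2.Stmt (fun _ : K' => Γ') Λ' (Option Γ')

/-- the stack read in a given state -/
def tkk : (St × Option Γ') ⊕ Bool → K'
  | .inl (.push k _ _, _) => k
  | .inl (.peek k _ _, _) => k
  | .inl (.pop k _ _, _) => k
  | _ => K'.main

/-- the transition function -/
def tdl : (St × Option Γ') ⊕ Bool → Option Γ' → ((St × Option Γ') ⊕ Bool) × List (Option Γ')
  | .inl (.push _ f q, v), o => (.inl (q, v), [some (f v), o])
  | .inl (.peek _ f q, v), o => (.inl (q, f v o), [o])
  | .inl (.pop _ f q, v), o => (.inl (q, f v o), match o with | none => [none] | some _ => [])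
  | .inl (.load f q, v), o => (.inl (q, f v), [o])
  | .inl (.branch f q₁ q₂, v), o => (.inl (cond (f v) q₁ q₂, v), [o])
  | .inl (.goto f, v), o => (.inl (tr (f v), v), [o])
  | .inl (.halt, _), o => (.inr (decide (o = some Γ'.cons)), [o])
  | .inr b, o => (.inr b, [o])

/-- encoding of stacks -/
def encS (S : K' → List Γ') : K' → List (Option Γ') := fun k => (S k).map some ++ [none]

/-- the machine simulating `tr` -/
def tmach (c : ToPartrec.Code) : Mach ((St × Option Γ') ⊕ Bool) K' (Option Γ') where
  kk := tkk
  dl := tdl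
  q0 := .inl (tr (trNormal c Cont'.halt), none)
  acc := .inr true
  rej := .inr false
  main := K'.main
  a0 := some Γ'.bit0
  base := encS (K'.elim [Γ'.bit1, Γ'.cons] [] [] [])

theorem encS_cons (S : K' → List Γ') (k : K') : ∃ t, encS S k = (S k).head? :: t ∧
    (∀ γ, (S k).head? = some γ → t = (S k).tail.map some ++ [none]) ∧
    ((S k).head? = none → t = [] ∧ S k = []) := by
  unfold encS
  cases S k with
  | nil => exact ⟨[], by simp⟩
  | cons a l => exact ⟨l.map some ++ [none], by simp⟩

theorem encS_update (S : K' → List Γ') (k : K') (l : List Γ') :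
    encS (Function.update S k l) = Function.update (encS S) k (l.map some ++ [none]) := by
  funext k'
  by_cases h : k' = k
  · subst h; simp [encS]
  · simp [encS, h]

/-- translation of a configuration -/
def trC (c : TM2.Cfg (fun _ : K' => Γ') Λ' (Option Γ')) :
    ((St × Option Γ') ⊕ Bool) × (K' → List (Option Γ')) :=
  (match c.l with
    | some l => .inl (tr l, c.var)
    | none => .inl (.halt, c.var), encS c.stk)

theorem step_aux (c : ToPartrec.Code) (q : St) (v : Option Γ') (S : K' → List Γ') :
    (tmach c).Reaches (.inl (q, v), encS S) (trC (TM2.stepAux q v S)) := by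
  have keep : ∀ (q q' : (St × Option Γ')) (S : K' → List Γ'),
      (∀ o, o = (S (tkk (.inl q))).head? → tdl (.inl q) o = (.inl q', [o])) →
      (tmach c).Step (.inl q, encS S) (.inl q', encS S) := by
    intro q q' S h
    obtain ⟨t, ht, -⟩ := encS_cons S (tkk (.inl q))
    refine ⟨by simp [tmach], by simp [tmach], _, t, ht, ?_⟩
    change _ = ((tdl (.inl q) _).1, Function.update (encS S) (tkk (.inl q)) ((tdl (.inl q) _).2 ++ t))
    rw [h _ rfl]
    simp only [List.singleton_append]
    rw [← ht, Function.update_eq_self]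
  induction q generalizing v S with
  | push k f q ih =>
    refine Relation.ReflTransGen.head ?_ (ih v (Function.update S k (f v :: S k)))
    obtain ⟨t, ht, -⟩ := encS_cons S k
    refine ⟨by simp [tmach], by simp [tmach], _, t, ht, ?_⟩
    rw [encS_update]
    change _ = (_, Function.update (encS S) k ([some (f v), _] ++ t))
    have : encS S k = (S k).map some ++ [none] := rfl
    simp only [List.map_cons, List.cons_append, List.nil_append, ← ht, this]
    rfl
  | peek k f q ih =>
    exact Relation.ReflTransGen.head (keep _ _ _ (by rintro o rfl; rfl)) (ih _ _)
  | pop k f q ih =>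
    refine Relation.ReflTransGen.head ?_ (ih (f v (S k).head?) (Function.update S k (S k).tail))
    obtain ⟨t, ht, h1, h2⟩ := encS_cons S k
    refine ⟨by simp [tmach], by simp [tmach], _, t, ht, ?_⟩
    rw [encS_update]
    change _ = (_, Function.update (encS S) k ((match (S k).head? with | none => [none] | some _ => []) ++ t))
    cases ho : (S k).head? with
    | none =>
      obtain ⟨rfl, h4⟩ := h2 ho
      simp [h4]; rfl
    | some γ =>
      rw [h1 γ ho]; rfl
  | load f q ih =>
    exact Relation.ReflTransGen.head (keep _ _ _ (by rintro o rfl; rfl)) (ih _ _)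
  | branch f q₁ q₂ ih₁ ih₂ =>
    refine Relation.ReflTransGen.head (keep _ (cond (f v) q₁ q₂, v) _ (by rintro o rfl; rfl)) ?_
    rw [TM2.stepAux]
    cases f v
    · exact ih₂ _ _
    · exact ih₁ _ _
  | goto f =>
    exact Relation.ReflTransGen.single (keep _ _ _ (by rintro o rfl; rfl))
  | halt => exact Relation.ReflTransGen.refl

theorem reaches_sim (c : ToPartrec.Code) (x y : TM2.Cfg (fun _ : K' => Γ') Λ' (Option Γ'))
    (h : StateTransition.Reaches (TM2.step tr) x y) : (tmach c).Reaches (trC x) (trC y) := by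
  induction h with
  | refl => exact Relation.ReflTransGen.refl
  | @tail b d _ hs ih =>
    refine Relation.ReflTransGen.trans ih ?_
    obtain ⟨l, v, S⟩ := b
    cases l with
    | none => exact absurd (show (none : Option _) = some d from hs) (by simp)
    | some l =>
      simp only [TM2.step, Option.mem_def, Option.some.injEq] at hs
      subst hs
      exact step_aux c _ _ _

theorem trNat_two_pow (n : ℕ) : trNat (2 ^ n) = List.replicate n Γ'.bit0 ++ [Γ'.bit1] := by
  have h : ∀ n : ℕ, ∃ p : PosNum, ((2 ^ n : ℕ) : Num) = Num.pos p ∧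
      trPosNum p = List.replicate n Γ'.bit0 ++ [Γ'.bit1] := by
    intro n
    induction n with
    | zero => exact ⟨1, by simp; rfl, rfl⟩
    | succ n ih =>
      obtain ⟨p, h1, h2⟩ := ih
      refine ⟨p.bit0, ?_, ?_⟩
      · rw [pow_succ, mul_comm, two_mul]
        push_cast
        push_cast at h1
        rw [h1]; exact Num.bit0_of_bit0 (Num.pos p)
      · rw [trPosNum, h2]; rfl
  obtain ⟨p, h1, h2⟩ := h n
  rw [trNat, h1]; exact h2

theorem init_eq (c : ToPartrec.Code) (n : ℕ) :
    (tmach c).initCfg n = trC (PartrecToTM2.init c [2 ^ n]) := by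
  refine Prod.ext rfl ?_
  funext k
  cases k
  all_goals simp [Mach.initCfg, tmach, trC, PartrecToTM2.init, encS, trNat_two_pow]

theorem tmach_halts (c : ToPartrec.Code) (n b : ℕ) (hb : b = 0 ∨ b = 1) (h : [b] ∈ c.eval [2 ^ n]) :
    ∃ S, (tmach c).Reaches ((tmach c).initCfg n) (.inr (decide (b = 0)), S) := by
  have h1 : PartrecToTM2.halt [b] ∈ StateTransition.eval (TM2.step tr) (PartrecToTM2.init c [2 ^ n]) := by
    have h2 := tr_eval c [2 ^ n]
    have h3 : PartrecToTM2.halt [b] ∈ PartrecToTM2.halt <$> c.eval [2 ^ n] := by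
      exact Part.mem_map _ h
    exact h2 ▸ h3
  have h4 := reaches_sim c _ _ (StateTransition.mem_eval.1 h1).1
  rw [← init_eq] at h4
  refine ⟨encS (K'.elim (trList [b]) [] [] []), Relation.ReflTransGen.tail h4
    ⟨by simp [tmach, trC, PartrecToTM2.halt], by simp [tmach, trC, PartrecToTM2.halt], ?_⟩⟩
  · rcases hb with rfl | rfl
    · refine ⟨some Γ'.cons, [none], ?_, ?_⟩
      · simp [tmach, trC, PartrecToTM2.halt, tkk, encS]
      · simp [tmach, trC, PartrecToTM2.halt, tkk, tdl]
        simp [encS]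
    · have h1 : trNat 1 = [Γ'.bit1] := by simpa using trNat_two_pow 0
      refine ⟨some Γ'.bit1, [some Γ'.cons, none], ?_, ?_⟩
      · simp [tmach, trC, PartrecToTM2.halt, tkk, encS, h1]
      · simp [tmach, trC, PartrecToTM2.halt, tkk, tdl]
        simp [encS, h1]

instance : Finite K' := by
  refine Finite.of_surjective (fun b : Bool × Bool => match b with
    | (true, true) => K'.main | (true, false) => K'.rev
    | (false, true) => K'.aux | (false, false) => K'.stack) ?_
  intro k
  cases k
  exacts [⟨(true, true), rfl⟩, ⟨(true, false), rfl⟩, ⟨(false, true), rfl⟩, ⟨(false, false), rfl⟩]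

theorem tmach_finite (c : ToPartrec.Code) : ∃ F : Set ((St × Option Γ') ⊕ Bool), F.Finite ∧
    (tmach c).q0 ∈ F ∧ (tmach c).acc ∈ F ∧ (tmach c).rej ∈ F ∧
    ∀ q ∈ F, ∀ a, ((tmach c).dl q a).1 ∈ F := by
  classical
  let T : Set St := {q | some q ∈ TM2.stmts tr (codeSupp c Cont'.halt)}
  have hT : T.Finite :=
    Set.Finite.preimage (Option.some_injective _).injOn (Finset.finite_toSet _)
  have hsupp := tr_supports c Cont'.halt
  have hlab : ∀ l ∈ codeSupp c Cont'.halt, tr l ∈ T := by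
    intro l hl
    simp only [T, TM2.stmts, Finset.mem_insertNone, Finset.mem_biUnion, Option.mem_def,
      Option.some.injEq, forall_eq']
    exact ⟨l, hl, TM2.stmts₁_self⟩
  refine ⟨Sum.inl '' (T ×ˢ Set.univ) ∪ Set.range Sum.inr, ?_, ?_, ?_, ?_, ?_⟩
  · exact ((hT.prod Set.finite_univ).image _).union (Set.finite_range _)
  · exact Or.inl ⟨_, ⟨hlab _ hsupp.1, Set.mem_univ _⟩, rfl⟩
  · exact Or.inr ⟨_, rfl⟩
  · exact Or.inr ⟨_, rfl⟩
  · rintro q (⟨⟨s, v⟩, ⟨hs, -⟩, rfl⟩ | ⟨b, rfl⟩) a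
    · have mk : ∀ (s' : St) v', s' ∈ TM2.stmts₁ s → (Sum.inl (s', v') : (St × Option Γ') ⊕ Bool) ∈
          Sum.inl '' (T ×ˢ Set.univ) ∪ Set.range Sum.inr := fun s' v' h =>
        Or.inl ⟨_, ⟨TM2.stmts_trans h hs, Set.mem_univ _⟩, rfl⟩
      cases s with
      | push k f q => exact mk _ _ (by rw [TM2.stmts₁]; exact Finset.mem_insert_of_mem TM2.stmts₁_self)
      | peek k f q => exact mk _ _ (by rw [TM2.stmts₁]; exact Finset.mem_insert_of_mem TM2.stmts₁_self)
      | pop k f q => exact mk _ _ (by rw [TM2.stmts₁]; exact Finset.mem_insert_of_mem TM2.stmts₁_self)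
      | load f q => exact mk _ _ (by rw [TM2.stmts₁]; exact Finset.mem_insert_of_mem TM2.stmts₁_self)
      | branch f q₁ q₂ =>
        refine mk _ _ ?_
        rw [TM2.stmts₁]
        refine Finset.mem_insert_of_mem ?_
        cases f v
        · exact Finset.mem_union_right _ TM2.stmts₁_self
        · exact Finset.mem_union_left _ TM2.stmts₁_self
      | goto f =>
        have h1 := @TM2.stmts_supportsStmt _ _ _ _ ⟨trNormal c Cont'.halt⟩ _ _ _ hsupp hs
        exact Or.inl ⟨_, ⟨hlab _ (h1 v), Set.mem_univ _⟩, rfl⟩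
      | halt => exact Or.inr ⟨_, rfl⟩
    · exact Or.inr ⟨_, rfl⟩

/-- a partial recursive function with recursively inseparable fibres over `0` and `1` -/
def diag (n : ℕ) : Part ℕ := (Denumerable.ofNat Nat.Partrec.Code n).eval n

theorem diag_partrec : Partrec diag :=
  Nat.Partrec.Code.eval_part.comp (Computable.ofNat _) Computable.id

theorem diag_insep (p : ℕ → Prop) (hp : ComputablePred p) (h0 : ∀ n, 0 ∈ diag n → ¬ p n)
    (h1 : ∀ n, 1 ∈ diag n → p n) : False := by
  obtain ⟨f, hf, rfl⟩ := ComputablePred.computable_iff.1 hp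
  have hg : Partrec (fun n => (Part.some (cond (f n) 0 1) : Part ℕ)) :=
    (Computable.cond hf (Computable.const 0) (Computable.const 1))
  obtain ⟨c, hc⟩ := Nat.Partrec.Code.exists_code.1 (Partrec.nat_iff.1 hg)
  have h : ∀ n, n = Encodable.encode c → diag n = Part.some (cond (f n) 0 1) := by
    rintro n rfl
    rw [diag, Denumerable.ofNat_encode, hc]
  specialize h _ rfl
  cases hfn : f (Encodable.encode c)
  · have := h1 (Encodable.encode c) (by rw [h, hfn]; simp)
    simp [hfn] at this
  · have := h0 (Encodable.encode c) (by rw [h, hfn]; simp)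
    simp [hfn] at this

/-- the same function, precomposed with a logarithm -/
def diagLog (m : ℕ) : Part ℕ := (Nat.rfind (fun k => Part.some (decide (2 ^ k = m)))).bind diag

theorem diagLog_partrec : Partrec diagLog := by
  refine Partrec.bind (Partrec.rfind ?_) (diag_partrec.comp Computable.snd)
  have hpow : Primrec (fun k : ℕ => 2 ^ k) := by
    refine (Primrec.nat_rec₁ 1 (f := fun _ b => b * 2) ?_).of_eq ?_
    · exact Primrec.nat_mul.comp Primrec.snd (Primrec.const 2)
    · intro n
      induction n with
      | zero => rfl
      | succ n ih => rw [pow_succ, ← ih]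
  have : Primrec (fun x : ℕ × ℕ => decide (2 ^ x.2 = x.1)) := by
    exact (Primrec.eq.comp (hpow.comp Primrec.snd) Primrec.fst).decide
  exact this.to_comp

theorem diagLog_two_pow (n b : ℕ) (h : b ∈ diag n) : b ∈ diagLog (2 ^ n) := by
  refine Part.mem_bind (a := n) ?_ h
  refine Nat.mem_rfind.2 ⟨by simp, fun {m} hm => ?_⟩
  simp only [Part.mem_some_iff]
  symm
  rw [decide_eq_false_iff_not]
  exact fun h => absurd (Nat.pow_right_injective le_rfl h) hm.ne

theorem exists_machine : ∃ (Q K A : Type) (_ : Finite Q) (_ : Finite K) (_ : Finite A)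
    (_ : DecidableEq K) (M : Mach Q K A), M.acc ≠ M.rej ∧
    ∀ p : ℕ → Prop, ComputablePred p →
      (∀ n, (∃ S, M.Reaches (M.initCfg n) (M.acc, S)) → ¬ p n) →
      (∀ n, (∃ S, M.Reaches (M.initCfg n) (M.rej, S)) → p n) → False := by
  have h : @Nat.Partrec' 1 fun v => diagLog v.head := Nat.Partrec'.part_iff₁.2 diagLog_partrec
  obtain ⟨c, hc⟩ := ToPartrec.Code.exists_code h
  have hc' : ∀ n b, b ∈ diag n → [b] ∈ c.eval [2 ^ n] := by
    intro n b hb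
    have := hc ⟨[2 ^ n], rfl⟩
    have h2 : c.eval [2 ^ n] = pure <$> diagLog (2 ^ n) := this
    rw [h2]
    exact Part.mem_map _ (diagLog_two_pow n b hb)
  obtain ⟨F, hF, h1, h2, h3, h4⟩ := tmach_finite c
  obtain ⟨N, hN, hN1, hN2⟩ := (tmach c).restrict F h1 h2 h3 (by simp [tmach]) h4
  refine ⟨F, K', Option Γ', hF.to_subtype, inferInstance, inferInstance, inferInstance, N, hN, ?_⟩
  intro p hp ha hr
  refine diag_insep p hp (fun n hn => ha n (hN1 n ?_)) (fun n hn => hr n (hN2 n ?_))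
  · exact tmach_halts c n 0 (Or.inl rfl) (hc' n 0 hn)
  · exact tmach_halts c n 1 (Or.inr rfl) (hc' n 1 hn)

end AltUndec

namespace AltUndec
open scoped commutatorElement
/-! ### Part 2: the relations and the accepting case -/

section Col
variable {G : Type*} [Group G]

theorem comm_key (x y z : G) (h1 : ⁅x, z⁆ = 1) (h2 : Commute ⁅y, z⁆ ⁅x, y⁆) :
    ⁅⁅x, y⁆, z⁆ = ⁅⁅y, z⁆⁻¹, x⁆ := by
  have hxz : x * z = z * x := commutatorElement_eq_one_iff_mul_comm.1 h1
  -- `y z y⁻¹ = c z`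
  have hc : y * z * y⁻¹ = ⁅y, z⁆ * z := by simp [commutatorElement_def]
  have e : ⁅⁅x, y⁆, z⁆ = ⁅y, z⁆⁻¹ * (⁅x, y⁆ * (⁅y, z⁆ * z) * ⁅x, y⁆⁻¹) * z⁻¹ := by
    have : ⁅y, z⁆⁻¹ * (⁅x, y⁆ * (⁅y, z⁆ * z) * ⁅x, y⁆⁻¹) * z⁻¹ =
        ⁅y, z⁆⁻¹ * (⁅x, y⁆ * ⁅y, z⁆) * z * ⁅x, y⁆⁻¹ * z⁻¹ := by group
    rw [this, ← h2.eq]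
    rw [commutatorElement_def ⁅x, y⁆ z]; group
  rw [e, ← hc]
  have e2 : ⁅x, y⁆ * (y * z * y⁻¹) * ⁅x, y⁆⁻¹ = x * y * (x⁻¹ * z * x) * y⁻¹ * x⁻¹ := by
    simp only [commutatorElement_def]; group
  have e3 : x⁻¹ * z * x = z := by rw [mul_assoc, ← hxz]; group
  rw [e2, e3]
  have e4 : x * y * z * y⁻¹ * x⁻¹ = x * ⁅y, z⁆ * x⁻¹ * z := by
    have : x * y * z * y⁻¹ * x⁻¹ = x * (y * z * y⁻¹) * x⁻¹ := by group
    rw [this, hc]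
    have e5 : z * x⁻¹ = x⁻¹ * z := by
      rw [eq_inv_mul_iff_mul_eq, ← mul_assoc, hxz]; group
    rw [← mul_assoc x, mul_assoc (x * _), e5]; group
  rw [e4, commutatorElement_def ⁅y, z⁆⁻¹ x]; group

variable {Lt I : Type*} (st : Lt → I) (col : Fin 5 → Fin 5 → Option Lt → G)

/-- Steinberg-type relations. -/
structure ColRel : Prop where
  c0 : ∀ m j s, m ≠ j → col m j s * col m j s = 1
  c1 : ∀ m m' j s, m ≠ m' → m' ≠ j → m ≠ j → ⁅col m m' none, col m' j s⁆ = col m j s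
  c2 : ∀ r m j s, r ≠ m → m ≠ j → r ≠ j → ⁅col r m s, col m j none⁆ = col r j s
  c3 : ∀ k l m j a s, k ≠ l → m ≠ j → j ≠ k → l ≠ m → ⁅col k l a, col m j s⁆ = 1
  c4 : ∀ r m p j s t, r ≠ m → r ≠ p → r ≠ j → m ≠ p → m ≠ j → p ≠ j →
    ⁅col r m (some s), col m j (some t)⁆ = ⁅col r p (some s), col p j (some t)⁆
  c5 : ∀ r m j s t, r ≠ m → r ≠ j → m ≠ j → st s ≠ st t →
    ⁅col r m (some s), col m j (some t)⁆ = ⁅col r m (some t), col m j (some s)⁆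
  c6 : ∀ m s, col m m s = 1

/-- A family behaving like a row. -/
structure Good (g : Fin 5 → G) : Prop where
  g1 : ∀ j k l a, k ≠ j → k ≠ l → ⁅g j, col k l a⁆ = 1
  g2 : ∀ m j, m ≠ j → ⁅g m, col m j none⁆ = g j

/-- the action of a letter on a row -/
def op (s : Lt) (g : Fin 5 → G) (j : Fin 5) : G := ⁅g (j + 1), col (j + 1) j (some s)⁆

variable {st col}

theorem exists_avoid (a b c d : Fin 5) : ∃ m : Fin 5, m ≠ a ∧ m ≠ b ∧ m ≠ c ∧ m ≠ d := by
  revert a b c d; decide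

theorem Good.indep1 (hC : ColRel st col) {g : Fin 5 → G} (hg : Good col g) (s : Lt) {m m' j : Fin 5}
    (h1 : m ≠ m') (h2 : m ≠ j) (h3 : m' ≠ j) :
    ⁅g m', col m' j (some s)⁆ = ⁅g m, col m j (some s)⁆⁻¹ := by
  have hc := hC.c1 m m' j (some s) h1 h3 h2
  have := comm_key (g m) (col m m' none) (col m' j (some s))
    (hg.g1 _ _ _ _ h1.symm h3) (by
      rw [hc, hg.g2 m m' h1]
      exact (commutatorElement_eq_one_iff_commute.1 (hg.g1 m' m j (some s) h1 h2)).symm)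
  rw [hg.g2 m m' h1, hc] at this
  rw [this, inv_eq_of_mul_eq_one_right (hC.c0 m j (some s) h2), commutatorElement_inv]

theorem Good.indep (hC : ColRel st col) {g : Fin 5 → G} (hg : Good col g) (s : Lt) {m j : Fin 5}
    (h2 : m ≠ j) : ⁅g m, col m j (some s)⁆ = op col s g j := by
  obtain ⟨p, hp1, hp2, hp3, -⟩ := exists_avoid m (j + 1) j j
  have hj : j + 1 ≠ j := (by decide : ∀ j : Fin 5, j + 1 ≠ j) j
  rw [op, hg.indep1 hC s hp1 hp3 h2, hg.indep1 hC s hp2 hp3 hj]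

theorem Good.op_inv (hC : ColRel st col) {g : Fin 5 → G} (hg : Good col g) (s : Lt) (j : Fin 5) :
    (op col s g j)⁻¹ = op col s g j := by
  obtain ⟨p, hp1, hp2, -, -⟩ := exists_avoid j j j j
  obtain ⟨m, hm1, hm2, -, -⟩ := exists_avoid j p j j
  have := hg.indep1 hC s hm2 hm1 hp1
  rw [hg.indep hC s hp1, hg.indep hC s hm1] at this
  exact this.symm

theorem Good.op (hC : ColRel st col) {g : Fin 5 → G} (hg : Good col g) (s : Lt) :
    Good col (op col s g) := by
  have G1 : ∀ j k l a, k ≠ j → k ≠ l → ⁅AltUndec.op col s g j, col k l a⁆ = 1 := by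
    intro j k l a h1 h2
    obtain ⟨m, hm1, hm2, hm3, -⟩ := exists_avoid j k l l
    rw [← hg.indep hC s hm1, commutatorElement_eq_one_iff_commute]
    have e1 := commutatorElement_eq_one_iff_commute.1 (hg.g1 m k l a hm2.symm h2)
    have e2 := commutatorElement_eq_one_iff_commute.1 (hC.c3 k l m j a (some s) h2 hm1 h1.symm hm3.symm)
    rw [commutatorElement_def]
    exact ((e1.mul_left e2.symm).mul_left e1.inv_left).mul_left e2.symm.inv_left
  refine ⟨G1, ?_⟩
  intro r j hrj
  obtain ⟨m, hm1, hm2, -, -⟩ := exists_avoid r j j j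
  have hc := hC.c2 m r j (some s) hm1 hrj hm2
  have := comm_key (g m) (col m r (some s)) (col r j none)
    (hg.g1 _ _ _ _ hm1.symm hrj) (by
      rw [hc, hg.indep hC s hm1]
      exact (commutatorElement_eq_one_iff_commute.1 (G1 r m j (some s) hm1 hm2)).symm)
  rw [hc, hg.indep hC s hm1] at this
  rw [this, inv_eq_of_mul_eq_one_right (hC.c0 m j (some s) hm2), ← commutatorElement_inv,
    hg.indep hC s hm2, hg.op_inv hC]

theorem Good.op_comm (hC : ColRel st col) {g : Fin 5 → G} (hg : Good col g) (s t : Lt)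
    (hst : st s ≠ st t) : AltUndec.op col t (AltUndec.op col s g) = AltUndec.op col s (AltUndec.op col t g) := by
  have key : ∀ s t : Lt, ∀ m r j, m ≠ r → r ≠ j → m ≠ j →
      AltUndec.op col t (AltUndec.op col s g) j = ⁅⁅col m r (some s), col r j (some t)⁆⁻¹, g m⁆ := by
    intro s t m r j h1 h2 h3
    obtain ⟨p, hp1, hp2, hp3, -⟩ := exists_avoid m r j j
    have hs := hg.op hC s
    rw [← hs.indep hC t h2, ← hg.indep hC s h1]
    refine comm_key _ _ _ (hg.g1 _ _ _ _ h1.symm h2) ?_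
    rw [hC.c4 m r p j s t h1 hp1.symm h3 hp2.symm h2 hp3, hg.indep hC s h1]
    have e1 := (commutatorElement_eq_one_iff_commute.1 (hs.g1 r m p (some s) h1 hp1.symm)).symm
    have e2 := (commutatorElement_eq_one_iff_commute.1 (hs.g1 r p j (some t) hp2 hp3)).symm
    rw [commutatorElement_def]
    exact ((e1.mul_left e2).mul_left e1.inv_left).mul_left e2.inv_left
  funext j
  obtain ⟨m, hm1, -, -, -⟩ := exists_avoid j j j j
  obtain ⟨r, hr1, hr2, -, -⟩ := exists_avoid j m j j
  rw [key s t m r j hr2.symm hr1 hm1, key t s m r j hr2.symm hr1 hm1,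
    hC.c5 m r j s t hr2.symm hm1 hr1 hst]

/-- the action of a word on a row -/
def opw (col : Fin 5 → Fin 5 → Option Lt → G) (g : Fin 5 → G) (w : List Lt) : Fin 5 → G :=
  w.foldl (fun g s => op col s g) g

theorem opw_cons (g : Fin 5 → G) (s : Lt) (w : List Lt) :
    opw col g (s :: w) = opw col (op col s g) w := rfl

theorem opw_append (g : Fin 5 → G) (w w' : List Lt) :
    opw col g (w ++ w') = opw col (opw col g w) w' := List.foldl_append

theorem Good.opw (hC : ColRel st col) {g : Fin 5 → G} (hg : Good col g) (w : List Lt) :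
    Good col (opw col g w) := by
  induction w generalizing g with
  | nil => exact hg
  | cons s w ih => exact ih (hg.op hC s)

theorem opw_one (w : List Lt) : opw col (1 : Fin 5 → G) w = 1 := by
  induction w with
  | nil => rfl
  | cons s w ih =>
    rw [opw_cons]
    have : op col s (1 : Fin 5 → G) = 1 := by funext j; simp [op]
    rw [this, ih]

/-- moving a letter to the front -/
theorem Good.opw_move (hC : ColRel st col) {g : Fin 5 → G} (hg : Good col g) (w w' : List Lt) (s : Lt)
    (hw : ∀ t ∈ w, st t ≠ st s) :
    AltUndec.opw col g (w ++ s :: w') = AltUndec.opw col g (s :: (w ++ w')) := by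
  induction w generalizing g with
  | nil => rfl
  | cons t w ih =>
    rw [List.cons_append, opw_cons, ih (hg.op hC t) (fun t' ht' => hw t' (List.mem_cons_of_mem _ ht')),
      opw_cons, hg.op_comm hC t s (hw t List.mem_cons_self)]
    rfl

/-- the group-word in which a row entry is moved around by letters -/
def zig (col : Fin 5 → Fin 5 → Option Lt → G) (y : G) (w : List Lt) : G :=
  w.foldl (fun y s => ⁅⁅y, col 0 1 (some s)⁆, col 1 0 none⁆) y

theorem Good.zig (hC : ColRel st col) {g : Fin 5 → G} (hg : Good col g) (w : List Lt) :
    zig col (g 0) w = AltUndec.opw col g w 0 := by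
  induction w generalizing g with
  | nil => rfl
  | cons s w ih =>
    have : ⁅⁅g 0, col 0 1 (some s)⁆, col 1 0 none⁆ = AltUndec.op col s g 0 := by
      rw [hg.indep hC s (by decide), (hg.op hC s).g2 1 0 (by decide)]
    rw [opw_cons, ← ih (hg.op hC s), ← this]; rfl

end Col

section Config
variable {G : Type*} [Group G] {I X : Type} [DecidableEq I]
  {col : Fin 5 → Fin 5 → Option (I × X) → G}

/-- the word of a family of stacks -/
def wordOf (l : List I) (z : I → List X) : List (I × X) :=
  l.flatMap (fun k => (z k).map (fun a => (k, a)))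

theorem wordOf_update_notMem (l : List I) (z : I → List X) (k : I) (h : k ∉ l) (t : List X) :
    wordOf l (Function.update z k t) = wordOf l z := by
  unfold wordOf
  refine List.flatMap_congr fun k' hk' => ?_
  rw [Function.update_of_ne (by rintro rfl; exact h hk')]

theorem Good.wordOf_cons (hC : ColRel (Prod.fst) col) {g : Fin 5 → G} (hg : Good col g) (l : List I)
    (hl : l.Nodup) (k : I) (hk : k ∈ l) (z : I → List X) (a : X) (t : List X) (hz : z k = a :: t) :
    AltUndec.opw col g (wordOf l z) =
      AltUndec.opw col (AltUndec.op col (k, a) g) (wordOf l (Function.update z k t)) := by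
  obtain ⟨l1, l2, rfl⟩ := List.append_of_mem hk
  have h1 : k ∉ l1 := fun h => by
    have := List.disjoint_of_nodup_append hl h
    simp at this
  have h2 : k ∉ l2 := fun h => by
    have := (List.nodup_append.1 hl).2.1
    simp [h] at this
  have e : ∀ z : I → List X, wordOf (l1 ++ k :: l2) z =
      wordOf l1 z ++ ((z k).map (fun a => (k, a)) ++ wordOf l2 z) := by
    intro z; simp [wordOf]
  rw [e, e, wordOf_update_notMem _ _ _ h1, wordOf_update_notMem _ _ _ h2, hz, Function.update_self,
    List.map_cons, List.cons_append, hg.opw_move hC, opw_cons]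
  intro t ht
  simp only [wordOf, List.mem_flatMap, List.mem_map] at ht
  obtain ⟨k', hk', a', -, rfl⟩ := ht
  rintro rfl
  exact h1 hk'

theorem Good.wordOf_append (hC : ColRel (Prod.fst) col) {g : Fin 5 → G} (hg : Good col g) (l : List I)
    (hl : l.Nodup) (k : I) (hk : k ∈ l) (z : I → List X) (w t : List X) :
    AltUndec.opw col g (wordOf l (Function.update z k (w ++ t))) =
      AltUndec.opw col (AltUndec.opw col g (w.map (fun a => (k, a)))) (wordOf l (Function.update z k t)) := by
  induction w generalizing g with
  | nil => rfl
  | cons a w ih =>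
    rw [hg.wordOf_cons hC l hl k hk _ a (w ++ t) (by simp)]
    simp only [Function.update_idem]
    rw [ih (hg.op hC _)]
    rfl

end Config

section Machine
variable {G : Type*} [Group G] {Q K A : Type} [DecidableEq K]

/-- stack symbols of the augmented machine (with a history stack) -/
abbrev Lett (Q K A : Type) := Option K × (A ⊕ (Q × A))

/-- contents of the stacks of the augmented machine -/
def aug (S : K → List A) (hs : List (Q × A)) : Option K → List (A ⊕ (Q × A))
  | none => hs.map Sum.inr
  | some k => (S k).map Sum.inl

/-- left hand side of a rule -/
def ruleL (M : Mach Q K A) (q : Q) (a : A) : List (Lett Q K A) := [(some (M.kk q), Sum.inl a)]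
/-- right hand side of a rule -/
def ruleR (M : Mach Q K A) (q : Q) (a : A) : List (Lett Q K A) :=
  ((M.dl q a).2.map (fun b => (some (M.kk q), Sum.inl b))) ++ [(none, Sum.inr (q, a))]

/-- relations for the machine -/
structure MachRel (M : Mach Q K A) (row : Q → Fin 5 → G) (col : Fin 5 → Fin 5 → Option (Lett Q K A) → G) :
    Prop where
  hC : ColRel (Prod.fst) col
  g1 : ∀ q j k l a, k ≠ j → k ≠ l → ⁅row q j, col k l a⁆ = 1
  g2 : ∀ q m j, m ≠ j → ⁅row q m, col m j none⁆ = row q j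
  rule : ∀ q a j, q ≠ M.acc → q ≠ M.rej →
    opw col (row q) (ruleL M q a) j = opw col (row (M.dl q a).1) (ruleR M q a) j
  hacc : ∀ j, row M.acc j = 1

theorem aug_update_some (S : K → List A) (hs : List (Q × A)) (k : K) (l : List A) :
    aug (Function.update S k l) hs = Function.update (aug S hs) (some k) (l.map Sum.inl) := by
  funext k'
  cases k' with
  | none => simp [aug]
  | some k' =>
    by_cases h : k' = k
    · subst h; simp [aug]
    · simp [aug, h]

theorem aug_update_none (S : K → List A) (hs hs' : List (Q × A)) :
    aug S hs' = Function.update (aug S hs) none (hs'.map Sum.inr) := by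
  funext k'
  cases k' <;> simp [aug]

variable {M : Mach Q K A} {row : Q → Fin 5 → G} {col : Fin 5 → Fin 5 → Option (Lett Q K A) → G}

theorem MachRel.good (h : MachRel M row col) (q : Q) : Good col (row q) := ⟨h.g1 q, h.g2 q⟩

theorem MachRel.step (h : MachRel M row col) (l : List (Option K)) (hl : l.Nodup) (hl' : ∀ k, k ∈ l)
    (c d : Q × (K → List A)) (hcd : M.Step c d) (hs : List (Q × A)) :
    ∃ hs', opw col (row c.1) (wordOf l (aug c.2 hs)) = opw col (row d.1) (wordOf l (aug d.2 hs')) := by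
  obtain ⟨q, S⟩ := c
  obtain ⟨h1, h2, a, t, h3, rfl⟩ := hcd
  simp only at h1 h2 h3 ⊢
  refine ⟨(q, a) :: hs, ?_⟩
  have hrule : opw col (row q) (ruleL M q a) = opw col (row (M.dl q a).1) (ruleR M q a) :=
    funext fun j => h.rule q a j h1 h2
  have e1 : opw col (row q) (wordOf l (aug S hs)) = opw col (opw col (row q) (ruleL M q a))
      (wordOf l (Function.update (aug S hs) (some (M.kk q)) (t.map Sum.inl))) := by
    rw [(h.good q).wordOf_cons h.hC l hl (some (M.kk q)) (hl' _) (aug S hs) (Sum.inl a) (t.map Sum.inl)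
      (by simp [aug, h3])]
    rfl
  rw [e1, hrule, ruleR, opw_append]
  rw [aug_update_some, List.map_append, (h.good _).wordOf_append h.hC l hl _ (hl' _), List.map_map,
    ← aug_update_some]
  have hg' := (h.good (M.dl q a).1).opw h.hC
    ((M.dl q a).2.map (fun b => ((some (M.kk q), Sum.inl b) : Lett Q K A)))
  have e2 := hg'.wordOf_cons h.hC l hl none (hl' _)
    (aug (Function.update S (M.kk q) t) ((q, a) :: hs)) (Sum.inr (q, a)) (hs.map Sum.inr) (by simp [aug])
  rw [← aug_update_none, aug_update_some] at e2
  exact e2.symm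

theorem MachRel.zig_eq_one (h : MachRel M row col) (l : List (Option K)) (hl : l.Nodup) (hl' : ∀ k, k ∈ l)
    (n : ℕ) (hacc : ∃ S, M.Reaches (M.initCfg n) (M.acc, S)) :
    zig col (row M.q0 0) (List.replicate n (some M.main, Sum.inl M.a0) ++ wordOf l (aug M.base [])) = 1 := by
  obtain ⟨S, hS⟩ := hacc
  have key : ∀ d, M.Reaches (M.initCfg n) d → ∃ hs, opw col (row M.q0) (wordOf l (aug (M.initCfg n).2 [])) =
      opw col (row d.1) (wordOf l (aug d.2 hs)) := by
    intro d hd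
    induction hd with
    | refl => exact ⟨[], rfl⟩
    | tail _ hs ih =>
      obtain ⟨hh, ih⟩ := ih
      obtain ⟨hh', e⟩ := h.step l hl hl' _ _ hs hh
      exact ⟨hh', ih.trans e⟩
  obtain ⟨hs, e⟩ := key _ hS
  have e1 : row M.acc = 1 := funext h.hacc
  rw [e1, opw_one] at e
  rw [(h.good M.q0).zig h.hC, opw_append]
  have e2 : (aug (M.initCfg n).2 [] : Option K → List (A ⊕ (Q × A))) =
      Function.update (aug M.base []) (some M.main) ((List.replicate n M.a0).map Sum.inl ++ (M.base M.main).map Sum.inl) := by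
    rw [Mach.initCfg, aug_update_some, List.map_append]
  rw [e2, (h.good M.q0).wordOf_append h.hC l hl _ (hl' _)] at e
  have e3 : Function.update (aug M.base [] : Option K → List (A ⊕ (Q × A))) (some M.main) ((M.base M.main).map Sum.inl)
      = aug M.base [] := by
    rw [← aug_update_some, Function.update_eq_self]
  rw [e3] at e
  simp only [List.map_map, List.map_replicate] at e
  rw [e]; rfl

/-- if one elementary generator dies, everything dies -/
theorem MachRel.dead (h : MachRel M row col) (h1 : col 1 2 none = 1) :
    (∀ i j a, col i j a = 1) ∧ ∀ q j, row q j = 1 := by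
  have a1 : ∀ j s, j ≠ 1 → j ≠ 2 → col 1 j s = 1 := by
    intro j s hj1 hj2
    rw [← h.hC.c1 1 2 j s (by decide) hj2.symm hj1.symm, h1]; simp
  have a2 : ∀ j s, col 1 j s = 1 := by
    intro j s
    by_cases hj1 : j = 1
    · subst hj1; exact h.hC.c6 _ _
    by_cases hj2 : j = 2
    · subst hj2
      rw [← h.hC.c1 1 3 2 s (by decide) (by decide) (by decide), a1 3 none (by decide) (by decide)]; simp
    · exact a1 j s hj1 hj2
  have a3 : ∀ i j s, j ≠ 1 → col i j s = 1 := by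
    intro i j s hj
    by_cases hi : i = 1
    · subst hi; exact a2 _ _
    by_cases hij : i = j
    · subst hij; exact h.hC.c6 _ _
    rw [← h.hC.c2 i 1 j s hi hj.symm hij, a2]; simp
  have a4 : ∀ i j a, col i j a = 1 := by
    intro i j s
    by_cases hj : j = 1
    · subst hj
      by_cases hi : i = 1
      · subst hi; exact a2 _ _
      obtain ⟨m, hm1, hm2, -, -⟩ := exists_avoid i 1 1 1
      rw [← h.hC.c2 i m 1 s hm1.symm hm2 hi, a3 i m s hm2]; simp
    · exact a3 i j s hj
  refine ⟨a4, fun q j => ?_⟩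
  obtain ⟨m, hm1, -, -, -⟩ := exists_avoid j j j j
  rw [← h.g2 q m j hm1, a4]; simp

/-- the eight-point set -/
abbrev Cube := ZMod 2 × ZMod 2 × ZMod 2

/-- flipping the middle bit -/
def permU : Equiv.Perm Cube where
  toFun x := (x.1, x.2.1 + 1, x.2.2)
  invFun x := (x.1, x.2.1 + 1, x.2.2)
  left_inv := by decide
  right_inv := by decide

/-- the controlled flip -/
def permW : Equiv.Perm Cube where
  toFun x := (x.1, x.2.1, x.2.2 + x.1)
  invFun x := (x.1, x.2.1, x.2.2 + x.1)
  left_inv := by decide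
  right_inv := by decide

/-- a perm not commuting with the controlled flip -/
def permC : Equiv.Perm Cube where
  toFun x := (x.1 + 1, x.2.1, x.2.2)
  invFun x := (x.1 + 1, x.2.1, x.2.2)
  left_inv := by decide
  right_inv := by decide

set_option maxRecDepth 100000 in
theorem sign_permU : permU ∈ alternatingGroup Cube := by
  rw [Equiv.Perm.mem_alternatingGroup]; decide +kernel
theorem sign_permW : permW ∈ alternatingGroup Cube := by
  rw [Equiv.Perm.mem_alternatingGroup]; decide +kernel
theorem sign_permC : permC ∈ alternatingGroup Cube := by
  rw [Equiv.Perm.mem_alternatingGroup]; decide +kernel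

/-- all relations -/
structure FullRel (M : Mach Q K A) (w : List (Lett Q K A)) (row : Q → Fin 5 → G)
    (col : Fin 5 → Fin 5 → Option (Lett Q K A) → G) (om : G) (hh : alternatingGroup Cube → G) : Prop where
  mr : MachRel M row col
  hm : ∀ x y, hh (x * y) = hh x * hh y
  hu : hh ⟨permU, sign_permU⟩ = col 1 2 none
  hw : ∀ x, om * hh x * om⁻¹ = hh (⟨permW, sign_permW⟩ * x * ⟨permW, sign_permW⟩⁻¹)
  ho : om = zig col (row M.q0 0) w

theorem FullRel.dead {w : List (Lett Q K A)} {om : G} {hh : alternatingGroup Cube → G}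
    (h : FullRel M w row col om hh) (h1 : om = 1) :
    (∀ i j a, col i j a = 1) ∧ (∀ q j, row q j = 1) ∧ ∀ x, hh x = 1 := by
  let f : alternatingGroup Cube →* G := MonoidHom.mk' hh h.hm
  haveI : IsSimpleGroup (alternatingGroup Cube) := alternatingGroup.isSimpleGroup (by
    simp [Nat.card_eq_fintype_card])
  have hker : f.ker = ⊤ := by
    refine (Subgroup.Normal.eq_bot_or_eq_top (inferInstance : f.ker.Normal)).resolve_left ?_
    intro hb
    let W : alternatingGroup Cube := ⟨permW, sign_permW⟩
    let C : alternatingGroup Cube := ⟨permC, sign_permC⟩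
    have h2 : f C = f (W * C * W⁻¹) := by
      have := h.hw C
      rw [h1, one_mul, inv_one, mul_one] at this
      exact this
    have h3 := (MonoidHom.ker_eq_bot_iff f).1 hb h2
    have h4 : (permC : Cube → Cube) (0, 0, 0) = (permW * permC * permW⁻¹) (0, 0, 0) :=
      congrArg (fun x : alternatingGroup Cube => (x : Equiv.Perm Cube) (0, 0, 0)) h3
    revert h4; decide
  have hh1 : ∀ x, hh x = 1 := fun x => by
    have : x ∈ f.ker := hker ▸ Subgroup.mem_top x
    exact this
  obtain ⟨a, b⟩ := h.mr.dead (by rw [← h.hu, hh1])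
  exact ⟨a, b, hh1⟩

end Machine

end AltUndec

namespace AltUndec
open scoped commutatorElement
/-! ### Part 3: the finite presentations -/

/-- A property of tuples in groups which is defined by finitely many relators. -/
def FP {X : Type} (P : (G : Type) → [Group G] → (X → G) → Prop) : Prop :=
  ∃ R : List (FreeGroup X), ∀ (G : Type) [Group G] (d : X → G),
    P G d ↔ ∀ r ∈ R, FreeGroup.lift d r = 1

section FP
variable {X : Type}

theorem FP.of_iff {P P' : (G : Type) → [Group G] → (X → G) → Prop} (h : FP P)
    (h' : ∀ (G : Type) [Group G] (d : X → G), P' G d ↔ P G d) : FP P' := by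
  obtain ⟨R, hR⟩ := h
  exact ⟨R, fun G _ d => (h' G d).trans (hR G d)⟩

theorem FP.and {P P' : (G : Type) → [Group G] → (X → G) → Prop} (h : FP P) (h' : FP P') :
    FP (fun G _ d => P G d ∧ P' G d) := by
  obtain ⟨R, hR⟩ := h
  obtain ⟨R', hR'⟩ := h'
  refine ⟨R ++ R', fun G _ d => ?_⟩
  show (P G d ∧ P' G d) ↔ _
  rw [hR, hR']
  simp only [List.mem_append, or_imp, forall_and]

theorem FP.all {ι : Type} [Finite ι] {P : ι → (G : Type) → [Group G] → (X → G) → Prop}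
    (h : ∀ i, FP (P i)) : FP (fun G _ d => ∀ i, P i G d) := by
  choose R hR using h
  have := Fintype.ofFinite ι
  refine ⟨(Finset.univ.toList).flatMap R, fun G _ d => ?_⟩
  simp only [List.mem_flatMap, Finset.mem_toList, Finset.mem_univ, true_and]
  constructor
  · rintro h r ⟨i, hi⟩
    exact (hR i G d).1 (h i) r hi
  · intro h i
    exact (hR i G d).2 fun r hr => h r ⟨i, hr⟩

theorem FP.imp {p : Prop} {P : (G : Type) → [Group G] → (X → G) → Prop}
    (h : p → FP P) : FP (fun G _ d => p → P G d) := by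
  by_cases hp : p
  · exact (h hp).of_iff fun G _ d => by simp [hp]
  · exact ⟨[], fun G _ d => by simp [hp]⟩

theorem FP.eq {a b : (G : Type) → [Group G] → (X → G) → G} (x y : FreeGroup X)
    (hx : ∀ (G : Type) [Group G] (d : X → G), a G d = FreeGroup.lift d x)
    (hy : ∀ (G : Type) [Group G] (d : X → G), b G d = FreeGroup.lift d y) :
    FP (fun G _ d => a G d = b G d) := by
  refine ⟨[x * y⁻¹], fun G _ d => ?_⟩
  simp [hx, hy, mul_inv_eq_one]

end FP

section Pres

/-- generators -/
abbrev Gen (Q K A : Type) :=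
  (Q × Fin 5) ⊕ (Fin 5 × Fin 5 × Option (Lett Q K A)) ⊕ Unit ⊕ Unit ⊕ alternatingGroup Cube

variable {Q K A : Type}
abbrev gRow (q : Q) (j : Fin 5) : Gen Q K A := .inl (q, j)
abbrev gCol (i j : Fin 5) (a : Option (Lett Q K A)) : Gen Q K A := .inr (.inl (i, j, a))
abbrev gY : Gen Q K A := .inr (.inr (.inl ()))
abbrev gOm : Gen Q K A := .inr (.inr (.inr (.inl ())))
abbrev gH (x : alternatingGroup Cube) : Gen Q K A := .inr (.inr (.inr (.inr x)))

/-- the row family -/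
abbrev dRow {G : Type} (d : Gen Q K A → G) : Q → Fin 5 → G := fun q j => d (gRow q j)
/-- the column family -/
abbrev dCol {G : Type} (d : Gen Q K A → G) : Fin 5 → Fin 5 → Option (Lett Q K A) → G :=
  fun i j a => d (gCol i j a)

theorem map_opw {G H Lt : Type} [Group G] [Group H] (f : G →* H) (col : Fin 5 → Fin 5 → Option Lt → G)
    (g : Fin 5 → G) (w : List Lt) (j : Fin 5) :
    f (opw col g w j) = opw (fun i j a => f (col i j a)) (fun j => f (g j)) w j := by
  induction w generalizing g with
  | nil => rfl
  | cons s w ih =>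
    rw [opw_cons, opw_cons, ih]
    congr 1
    funext j
    simp [op, map_commutatorElement]

theorem map_zig {G H Lt : Type} [Group G] [Group H] (f : G →* H) (col : Fin 5 → Fin 5 → Option Lt → G)
    (g : G) (w : List Lt) :
    f (zig col g w) = zig (fun i j a => f (col i j a)) (f g) w := by
  induction w generalizing g with
  | nil => rfl
  | cons s w ih =>
    simp only [zig, List.foldl_cons] at ih ⊢
    rw [ih]
    simp [map_commutatorElement]

theorem lift_comm {X G : Type} [Group G] (d : X → G) (x y : FreeGroup X) :
    FreeGroup.lift d ⁅x, y⁆ = ⁅FreeGroup.lift d x, FreeGroup.lift d y⁆ :=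
  map_commutatorElement _ _ _

variable [Finite Q] [Finite K] [Finite A]

theorem fp_colRel : FP (X := Gen Q K A) (fun _ _ d => ColRel Prod.fst (dCol d)) := by
  classical
  have h0 : FP (X := Gen Q K A) (fun G _ d => ∀ m j s, m ≠ j → dCol d m j s * dCol d m j s = 1) :=
    .all fun m => .all fun j => .all fun s => .imp fun _ =>
      .eq (FreeGroup.of (gCol m j s) * FreeGroup.of (gCol m j s)) 1 (by simp) (by simp)
  have h1 : FP (X := Gen Q K A) (fun G _ d => ∀ m m' j s, m ≠ m' → m' ≠ j → m ≠ j →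
      ⁅dCol d m m' none, dCol d m' j s⁆ = dCol d m j s) :=
    .all fun m => .all fun m' => .all fun j => .all fun s => .imp fun _ => .imp fun _ => .imp fun _ =>
      .eq ⁅FreeGroup.of (gCol m m' none), FreeGroup.of (gCol m' j s)⁆ (FreeGroup.of (gCol m j s)) (fun G _ d => by rw [lift_comm]; simp)
        (by simp)
  have h2 : FP (X := Gen Q K A) (fun G _ d => ∀ r m j s, r ≠ m → m ≠ j → r ≠ j →
      ⁅dCol d r m s, dCol d m j none⁆ = dCol d r j s) :=
    .all fun m => .all fun m' => .all fun j => .all fun s => .imp fun _ => .imp fun _ => .imp fun _ =>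
      .eq ⁅FreeGroup.of (gCol m m' s), FreeGroup.of (gCol m' j none)⁆ (FreeGroup.of (gCol m j s)) (fun G _ d => by rw [lift_comm]; simp)
        (by simp)
  have h3 : FP (X := Gen Q K A) (fun G _ d => ∀ k l m j a s, k ≠ l → m ≠ j → j ≠ k → l ≠ m →
      ⁅dCol d k l a, dCol d m j s⁆ = 1) :=
    .all fun k => .all fun l => .all fun m => .all fun j => .all fun a => .all fun s =>
      .imp fun _ => .imp fun _ => .imp fun _ => .imp fun _ =>
      .eq ⁅FreeGroup.of (gCol k l a), FreeGroup.of (gCol m j s)⁆ 1 (fun G _ d => by rw [lift_comm]; simp) (by simp)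
  have h4 : FP (X := Gen Q K A) (fun G _ d => ∀ r m p j s t,
      r ≠ m → r ≠ p → r ≠ j → m ≠ p → m ≠ j → p ≠ j →
      ⁅dCol d r m (some s), dCol d m j (some t)⁆ = ⁅dCol d r p (some s), dCol d p j (some t)⁆) :=
    .all fun r => .all fun m => .all fun p => .all fun j => .all fun s => .all fun t =>
      .imp fun _ => .imp fun _ => .imp fun _ => .imp fun _ => .imp fun _ => .imp fun _ =>
      .eq ⁅FreeGroup.of (gCol r m (some s)), FreeGroup.of (gCol m j (some t))⁆
        ⁅FreeGroup.of (gCol r p (some s)), FreeGroup.of (gCol p j (some t))⁆ (fun G _ d => by rw [lift_comm]; simp)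
        (fun G _ d => by rw [lift_comm]; simp)
  have h5 : FP (X := Gen Q K A) (fun G _ d => ∀ r m j (s t : Lett Q K A),
      r ≠ m → r ≠ j → m ≠ j → s.1 ≠ t.1 →
      ⁅dCol d r m (some s), dCol d m j (some t)⁆ = ⁅dCol d r m (some t), dCol d m j (some s)⁆) :=
    .all fun r => .all fun m => .all fun j => .all fun s => .all fun t =>
      .imp fun _ => .imp fun _ => .imp fun _ => .imp fun _ =>
      .eq ⁅FreeGroup.of (gCol r m (some s)), FreeGroup.of (gCol m j (some t))⁆
        ⁅FreeGroup.of (gCol r m (some t)), FreeGroup.of (gCol m j (some s))⁆ (fun G _ d => by rw [lift_comm]; simp)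
        (fun G _ d => by rw [lift_comm]; simp)
  have h6 : FP (X := Gen Q K A) (fun G _ d => ∀ m s, dCol d m m s = 1) :=
    .all fun m => .all fun s => .eq (FreeGroup.of (gCol m m s)) 1 (by simp) (by simp)
  refine (h0.and (h1.and (h2.and (h3.and (h4.and (h5.and h6)))))).of_iff fun G _ d => ?_
  exact ⟨fun h => ⟨h.c0, h.c1, h.c2, h.c3, h.c4, h.c5, h.c6⟩,
    fun ⟨a0, a1, a2, a3, a4, a5, a6⟩ => ⟨a0, a1, a2, a3, a4, a5, a6⟩⟩

theorem fp_machRel (M : Mach Q K A) :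
    FP (X := Gen Q K A) (fun _ _ d => MachRel M (dRow d) (dCol d)) := by
  have h1 : FP (X := Gen Q K A) (fun G _ d => ∀ q j k l a, k ≠ j → k ≠ l → ⁅dRow d q j, dCol d k l a⁆ = 1) :=
    .all fun q => .all fun j => .all fun k => .all fun l => .all fun a => .imp fun _ => .imp fun _ =>
      .eq ⁅FreeGroup.of (gRow q j), FreeGroup.of (gCol k l a)⁆ 1 (fun G _ d => by rw [lift_comm]; simp) (by simp)
  have h2 : FP (X := Gen Q K A) (fun G _ d => ∀ q m j, m ≠ j → ⁅dRow d q m, dCol d m j none⁆ = dRow d q j) :=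
    .all fun q => .all fun m => .all fun j => .imp fun _ =>
      .eq ⁅FreeGroup.of (gRow q m), FreeGroup.of (gCol m j none)⁆ (FreeGroup.of (gRow q j)) (fun G _ d => by rw [lift_comm]; simp) (by simp)
  have h3 : FP (X := Gen Q K A) (fun G _ d => ∀ q a j, q ≠ M.acc → q ≠ M.rej →
      opw (dCol d) (dRow d q) (ruleL M q a) j = opw (dCol d) (dRow d (M.dl q a).1) (ruleR M q a) j) :=
    .all fun q => .all fun a => .all fun j => .imp fun _ => .imp fun _ =>
      .eq (opw (dCol FreeGroup.of) (dRow FreeGroup.of q) (ruleL M q a) j)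
        (opw (dCol FreeGroup.of) (dRow FreeGroup.of (M.dl q a).1) (ruleR M q a) j)
        (fun G _ d => by rw [map_opw]; simp) (fun G _ d => by rw [map_opw]; simp)
  have h4 : FP (X := Gen Q K A) (fun G _ d => ∀ j, dRow d M.acc j = 1) :=
    .all fun j => .eq (FreeGroup.of (gRow M.acc j)) 1 (by simp) (by simp)
  refine (fp_colRel.and (h1.and (h2.and (h3.and h4)))).of_iff fun G _ d => ?_
  exact ⟨fun h => ⟨h.hC, h.g1, h.g2, h.rule, h.hacc⟩, fun ⟨a0, a1, a2, a3, a4⟩ => ⟨a0, a1, a2, a3, a4⟩⟩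

/-- the relations not depending on the input -/
def FixRel (M : Mach Q K A) {G : Type} [Group G] (d : Gen Q K A → G) : Prop :=
  MachRel M (dRow d) (dCol d) ∧ (∀ x y, d (gH (x * y)) = d (gH x) * d (gH y)) ∧
    d (gH ⟨permU, sign_permU⟩) = d (gCol 1 2 none) ∧
    ∀ x, d gOm * d (gH x) * (d gOm)⁻¹ = d (gH (⟨permW, sign_permW⟩ * x * ⟨permW, sign_permW⟩⁻¹))

theorem fp_fixRel (M : Mach Q K A) : FP (X := Gen Q K A) (fun _ _ d => FixRel M d) := by
  refine (fp_machRel M).and (.and ?_ (.and ?_ ?_))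
  · exact .all fun x => .all fun y => .eq (FreeGroup.of (gH (x * y))) (FreeGroup.of (gH x) * FreeGroup.of (gH y)) (by simp) (by simp)
  · exact .eq (FreeGroup.of (gH ⟨permU, sign_permU⟩)) (FreeGroup.of (gCol 1 2 none)) (by simp) (by simp)
  · exact .all fun x => .eq (FreeGroup.of gOm * FreeGroup.of (gH x) * (FreeGroup.of gOm)⁻¹)
      (FreeGroup.of (gH (⟨permW, sign_permW⟩ * x * ⟨permW, sign_permW⟩⁻¹))) (by simp) (by simp)

end Pres

section Words
variable {α : Type}

/-- commutator of words -/
def commW (a b : List (α × Bool)) : List (α × Bool) :=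
  a ++ b ++ FreeGroup.invRev a ++ FreeGroup.invRev b

theorem mk_commW (a b : List (α × Bool)) :
    FreeGroup.mk (commW a b) = ⁅FreeGroup.mk a, FreeGroup.mk b⁆ := by
  simp [commW, commutatorElement_def, FreeGroup.inv_mk, FreeGroup.mul_mk]

/-- words for `zig` -/
def zigW {Lt : Type} (x : Lt → α) (y : α) (w : List (α × Bool)) (l : List Lt) : List (α × Bool) :=
  l.foldl (fun w s => commW (commW w [(x s, true)]) [(y, true)]) w

theorem mk_zigW {Lt : Type} (col : Fin 5 → Fin 5 → Option Lt → α) (w : List (α × Bool)) (l : List Lt) :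
    FreeGroup.mk (zigW (fun s => col 0 1 (some s)) (col 1 0 none) w l) =
      zig (fun i j a => FreeGroup.of (col i j a)) (FreeGroup.mk w) l := by
  induction l generalizing w with
  | nil => rfl
  | cons s l ih =>
    simp only [zigW, zig, List.foldl_cons] at ih ⊢
    rw [ih, mk_commW, mk_commW]
    rfl

theorem commW_primrec [Primcodable α] (b : List (α × Bool)) :
    Primrec (fun a : List (α × Bool) => commW a b) := by
  have hinv : Primrec (fun a : List (α × Bool) => FreeGroup.invRev a) := by
    unfold FreeGroup.invRev
    refine Primrec.list_reverse.comp (Primrec.list_map Primrec.id ?_)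
    refine Primrec.pair (Primrec.fst.comp Primrec.snd) (Primrec.not.comp (Primrec.snd.comp Primrec.snd))
  unfold commW
  refine Primrec.list_append.comp (Primrec.list_append.comp (Primrec.list_append.comp Primrec.id
    (Primrec.const _)) hinv) (Primrec.const _)

theorem zigW_primrec [Primcodable α] {Lt : Type} (x : Lt → α) (y : α) (l : List Lt)
    (F : ℕ → List (α × Bool)) (hF : Primrec F) : Primrec (fun n => zigW x y (F n) l) := by
  induction l generalizing F with
  | nil => exact hF
  | cons s l ih =>
    exact ih (fun n => commW (commW (F n) [(x s, true)]) [(y, true)])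
      ((commW_primrec _).comp ((commW_primrec _).comp hF))

theorem zigW_replicate_primrec [Primcodable α] {Lt : Type} (x : Lt → α) (y : α) (s : Lt)
    (w : List (α × Bool)) : Primrec (fun n => zigW x y w (List.replicate n s)) := by
  refine (Primrec.nat_rec₁ w (f := fun _ w => commW (commW w [(x s, true)]) [(y, true)]) ?_).of_eq ?_
  · exact (commW_primrec _).comp ((commW_primrec _).comp Primrec.snd)
  · intro n
    induction n with
    | zero => rfl
    | succ n ih =>
      rw [List.replicate_succ', zigW, List.foldl_append]
      simp only [List.foldl_cons, List.foldl_nil]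
      rw [ih]; rfl

theorem list_computable {β : Type} [Primcodable β] (L0 : List (List β)) (F : ℕ → List β)
    (hF : Computable F) : Computable (fun n => L0 ++ [F n]) := by
  refine Computable.list_append.comp (Computable.const _) ?_
  exact Computable.list_cons.comp hF (Computable.const _)

end Words

theorem presented_surj_iff (s : ℕ) (L : List (List (Fin s × Bool))) (G : Type) [Group G] :
    (∃ φ : presentedGroupOf ⟨s, L⟩ →* G, Function.Surjective φ) ↔
      ∃ f : Fin s → G, (∀ w ∈ L, FreeGroup.lift f (FreeGroup.mk w) = 1) ∧
        Subgroup.closure (Set.range f) = ⊤ := by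
  change (∃ φ : PresentedGroup {x : FreeGroup (Fin s) | ∃ w ∈ L, x = FreeGroup.mk w} →* G,
    Function.Surjective φ) ↔ _
  constructor
  · rintro ⟨φ, hφ⟩
    have e : FreeGroup.lift (fun i => φ (PresentedGroup.of i)) = φ.comp (PresentedGroup.mk _) := by
      ext i; simp [PresentedGroup.of]
    refine ⟨fun i => φ (PresentedGroup.of i), ?_, ?_⟩
    · intro w hw
      rw [e, MonoidHom.comp_apply]
      have : PresentedGroup.mk {x : FreeGroup (Fin s) | ∃ w ∈ L, x = FreeGroup.mk w} (FreeGroup.mk w) = 1 :=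
        PresentedGroup.one_of_mem ⟨w, hw, rfl⟩
      rw [this, map_one]
    · have h1 := PresentedGroup.closure_range_of {x : FreeGroup (Fin s) | ∃ w ∈ L, x = FreeGroup.mk w}
      have h2 := congrArg (Subgroup.map φ) h1
      rw [MonoidHom.map_closure, Subgroup.map_top_of_surjective φ hφ, ← Set.range_comp] at h2
      exact h2
  · rintro ⟨f, hf, hcl⟩
    refine ⟨PresentedGroup.toGroup (f := f) ?_, ?_⟩
    · rintro r ⟨w, hw, rfl⟩
      exact hf w hw
    · rw [← MonoidHom.range_eq_top, ← top_le_iff, ← hcl, Subgroup.closure_le]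
      rintro _ ⟨i, rfl⟩
      exact ⟨PresentedGroup.of i, PresentedGroup.toGroup.of _⟩

/-- The input word. -/
def inWord {Q K A : Type} (M : Mach Q K A) (l : List (Option K)) (n : ℕ) : List (Lett Q K A) :=
  List.replicate n (some M.main, Sum.inl M.a0) ++ wordOf l (aug M.base [])

theorem exists_reduction {Q K A : Type} [Finite Q] [Finite K] [Finite A] (M : Mach Q K A)
    (l : List (Option K)) :
    ∃ R : ℕ → Σ s : ℕ, List (List (Fin s × Bool)), Computable R ∧ ∀ n (G : Type) [Group G],
      (∃ φ : presentedGroupOf (R n) →* G, Function.Surjective φ) ↔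
        ∃ d : Gen Q K A → G,
          FullRel M (inWord M l n) (dRow d) (dCol d) (d gOm) (fun x => d (gH x)) ∧
          Subgroup.closure (Set.range d) = ⊤ := by
  classical
  have := Fintype.ofFinite (Gen Q K A)
  let s := Fintype.card (Gen Q K A)
  let e : Gen Q K A ≃ Fin s := Fintype.equivFin _
  obtain ⟨R0, hR0⟩ := fp_fixRel M
  let L0 : List (List (Fin s × Bool)) := R0.map (fun r => (FreeGroup.map e r).toWord)
  let W : ℕ → List (Fin s × Bool) := fun n => (e gOm, false) ::
    zigW (fun t => e (gCol 0 1 (some t))) (e (gCol 1 0 none)) [(e (gRow M.q0 0), true)] (inWord M l n)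
  have hW : Primrec W := by
    refine Primrec.list_cons.comp (Primrec.const _) ?_
    have := zigW_primrec (fun t => e (gCol 0 1 (some t))) (e (gCol 1 0 none)) (wordOf l (aug M.base []))
      _ (zigW_replicate_primrec (fun t => e (gCol 0 1 (some t))) (e (gCol 1 0 none))
        (some M.main, Sum.inl M.a0) [(e (gRow M.q0 0), true)])
    refine this.of_eq fun n => ?_
    simp [inWord, zigW]
  refine ⟨fun n => ⟨s, L0 ++ [W n]⟩, computable_sigma s _ (list_computable L0 W hW.to_comp), ?_⟩
  intro n G _
  rw [presented_surj_iff]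
  have key : ∀ d : Gen Q K A → G, (∀ w ∈ L0 ++ [W n], FreeGroup.lift (fun i => d (e.symm i)) (FreeGroup.mk w) = 1) ↔
      FullRel M (inWord M l n) (dRow d) (dCol d) (d gOm) (fun x => d (gH x)) := by
    intro d
    have hm : ∀ r, FreeGroup.lift (fun i => d (e.symm i)) (FreeGroup.map e r) = FreeGroup.lift d r := by
      intro r
      have : (FreeGroup.lift (fun i => d (e.symm i))).comp (FreeGroup.map e) = FreeGroup.lift d := by
        ext x; simp
      rw [← this]; rfl
    have h1 : (∀ w ∈ L0, FreeGroup.lift (fun i => d (e.symm i)) (FreeGroup.mk w) = 1) ↔ FixRel M d := by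
      refine Iff.trans ?_ (hR0 G d).symm
      simp only [L0, List.mem_map, forall_exists_index, and_imp, forall_apply_eq_imp_iff₂,
        FreeGroup.mk_toWord, hm]
    have h2 : FreeGroup.lift (fun i => d (e.symm i)) (FreeGroup.mk (W n)) = 1 ↔
        d gOm = zig (dCol d) (d (gRow M.q0 0)) (inWord M l n) := by
      have : FreeGroup.mk (W n) = (FreeGroup.of (e gOm))⁻¹ *
          zig (fun i j a => FreeGroup.of (e (gCol i j a))) (FreeGroup.of (e (gRow M.q0 0))) (inWord M l n) := by
        have := mk_zigW (fun i j a => e (gCol i j a)) [(e (gRow M.q0 0), true)] (inWord M l n)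
        change _ = _ * zig _ (FreeGroup.mk [(e (gRow M.q0 0), true)]) (inWord M l n)
        rw [← this, FreeGroup.of, FreeGroup.inv_mk, FreeGroup.mul_mk]
        rfl
      rw [this, map_mul, map_inv, inv_mul_eq_one, map_zig]
      simp
    simp only [List.mem_append, List.mem_singleton, or_imp, forall_and, forall_eq]
    rw [h1, h2]
    exact ⟨fun ⟨⟨a, b, c, e⟩, f⟩ => ⟨a, b, c, e, f⟩, fun ⟨a, b, c, e, f⟩ => ⟨⟨a, b, c, e⟩, f⟩⟩
  constructor
  · rintro ⟨f, hf, hcl⟩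
    refine ⟨fun x => f (e x), ?_, ?_⟩
    · rw [← key]; simpa using hf
    · rw [← hcl]
      congr 1
      exact e.surjective.range_comp f
  · rintro ⟨d, hd, hcl⟩
    refine ⟨fun i => d (e.symm i), (key d).2 hd, ?_⟩
    rw [← hcl]
    congr 1
    exact e.symm.surjective.range_comp d

/-- The accepting case: no alternating quotients. -/
theorem accept_no_alt {Q K A : Type} [DecidableEq K] (M : Mach Q K A)
    (l : List (Option K)) (hl : l.Nodup) (hl' : ∀ k, k ∈ l) (n : ℕ)
    (hacc : ∃ S, M.Reaches (M.initCfg n) (M.acc, S)) (N : ℕ) (hN : 5 ≤ N)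
    (d : Gen Q K A → alternatingGroup (Fin N))
    (h : FullRel M (inWord M l n) (dRow d) (dCol d) (d gOm) (fun x => d (gH x)))
    (hcl : Subgroup.closure (Set.range d) = ⊤) : False := by
  have h1 : d gOm = 1 := by rw [h.ho]; exact h.mr.zig_eq_one l hl hl' n hacc
  obtain ⟨a, b, c⟩ := h.dead h1
  have hsub : Subgroup.closure (Set.range d) ≤ Subgroup.zpowers (d gY) := by
    rw [Subgroup.closure_le]
    rintro _ ⟨x, rfl⟩
    rcases x with ⟨q, j⟩ | ⟨i, j, t⟩ | ⟨⟩ | ⟨⟩ | x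
    · rw [show d (Sum.inl (q, j)) = 1 from b q j]; exact one_mem _
    · rw [show d (Sum.inr (Sum.inl (i, j, t))) = 1 from a i j t]; exact one_mem _
    · exact Subgroup.mem_zpowers _
    · rw [show d _ = 1 from h1]; exact one_mem _
    · rw [show d _ = 1 from c x]; exact one_mem _
  rw [hcl, top_le_iff] at hsub
  have hcomm : ∀ x y : alternatingGroup (Fin N), x * y = y * x := by
    intro x y
    have hx : x ∈ Subgroup.zpowers (d gY) := hsub ▸ Subgroup.mem_top x
    have hy : y ∈ Subgroup.zpowers (d gY) := hsub ▸ Subgroup.mem_top y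
    obtain ⟨i, rfl⟩ := hx
    obtain ⟨j, rfl⟩ := hy
    exact zpow_mul_comm _ _ _
  have hc : Subgroup.center (alternatingGroup (Fin N)) = ⊤ := by
    rw [eq_top_iff]; intro x _; rw [Subgroup.mem_center_iff]; exact fun g => hcomm g x
  rw [alternatingGroup.center_eq_bot (by simp; omega)] at hc
  have : Nontrivial (alternatingGroup (Fin N)) := alternatingGroup.nontrivial_of_three_le_card (by simp; omega)
  exact bot_ne_top hc

end AltUndec

namespace AltUndec
/-! ### Part 4: the linear data coming from a rejecting computation -/

section Push
variable {I X : Type} [DecidableEq I]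

/-- pushing a symbol -/
def push (s : I × X) (z : I → List X) : I → List X := Function.update z s.1 (s.2 :: z s.1)

theorem push_comm (s t : I × X) (h : s.1 ≠ t.1) (z : I → List X) :
    push s (push t z) = push t (push s z) := by
  unfold push
  rw [Function.update_of_ne h, Function.update_of_ne h.symm, Function.update_comm h]

theorem push_injective (s : I × X) : Function.Injective (push s) := by
  intro z z' h
  funext k
  have h1 := congrFun h k
  by_cases hk : k = s.1
  · subst hk
    simpa [push] using h1
  · simpa [push, hk] using h1

theorem foldr_push_map (k : I) (xs : List X) (z : I → List X) :
    (xs.map (fun a => (k, a))).foldr push z = Function.update z k (xs ++ z k) := by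
  induction xs with
  | nil => simp
  | cons a xs ih => simp [ih, push]

theorem foldr_push_wordOf (l : List I) (hl : l.Nodup) (y z : I → List X) (k : I) :
    (wordOf l y).foldr push z k = if k ∈ l then y k ++ z k else z k := by
  induction l with
  | nil => simp [wordOf]
  | cons k' l ih =>
    have hl' := List.nodup_cons.1 hl
    have e : wordOf (k' :: l) y = (y k').map (fun a => (k', a)) ++ wordOf l y := by simp [wordOf]
    rw [e, List.foldr_append, foldr_push_map]
    by_cases hk : k = k'
    · subst hk
      rw [Function.update_self, ih hl'.2, if_neg hl'.1]; simp
    · rw [Function.update_of_ne hk, ih hl'.2]; simp [hk]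

end Push

section Run
variable {Q K A : Type} [DecidableEq K] (M : Mach Q K A)

/-- configurations of the augmented machine -/
abbrev ZConf (Q K A : Type) := Q × (Option K → List (A ⊕ (Q × A)))

/-- step of the augmented machine -/
def ZStep (c d : ZConf Q K A) : Prop :=
  c.1 ≠ M.acc ∧ c.1 ≠ M.rej ∧ ∃ a z, c.2 = (ruleL M c.1 a).foldr push z ∧
    d = ((M.dl c.1 a).1, (ruleR M c.1 a).foldr push z)

variable {M}

theorem ZStep.det {c d d' : ZConf Q K A} (h : ZStep M c d) (h' : ZStep M c d') : d = d' := by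
  obtain ⟨-, -, a, z, h1, rfl⟩ := h
  obtain ⟨-, -, a', z', h1', rfl⟩ := h'
  rw [h1] at h1'
  simp only [ruleL, List.foldr_cons, List.foldr_nil] at h1'
  have e : a = a' := by
    have := congrFun h1' (some (M.kk c.1))
    simp [push] at this
    exact this.1
  subst e
  have := push_injective _ h1'
  rw [this]

theorem ruleR_foldr (q : Q) (a : A) (z : Option K → List (A ⊕ (Q × A))) :
    (ruleR M q a).foldr push z = Function.update (Function.update z none (Sum.inr (q, a) :: z none))
      (some (M.kk q)) ((M.dl q a).2.map Sum.inl ++ z (some (M.kk q))) := by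
  have := foldr_push_map (some (M.kk q)) ((M.dl q a).2.map (Sum.inl : A → A ⊕ (Q × A)))
    (push (none, Sum.inr (q, a)) z)
  rw [List.map_map] at this
  simp only [ruleR, List.foldr_append, List.foldr_cons, List.foldr_nil]
  refine Eq.trans this ?_
  simp [push]

theorem ruleR_injective (q : Q) (a : A) {z z' : Option K → List (A ⊕ (Q × A))}
    (h : (ruleR M q a).foldr push z = (ruleR M q a).foldr push z') : z = z' := by
  have : ∀ w : List (Lett Q K A), Function.Injective (fun z : Option K → List (A ⊕ (Q × A)) => w.foldr push z) := by
    intro w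
    induction w with
    | nil => exact fun _ _ h => h
    | cons s w ih => exact fun _ _ h => ih (push_injective s h)
  exact this _ h

theorem ZStep.hist {c d : ZConf Q K A} (h : ZStep M c d) : ∃ a z, c.2 = (ruleL M c.1 a).foldr push z ∧
    d = ((M.dl c.1 a).1, (ruleR M c.1 a).foldr push z) ∧ d.2 none = Sum.inr (c.1, a) :: z none := by
  obtain ⟨-, -, a, z, h1, rfl⟩ := h
  exact ⟨a, z, h1, rfl, by rw [ruleR_foldr]; simp⟩

/-- the set of configurations reached -/
def Reach (M : Mach Q K A) (c : ZConf Q K A) : Set (ZConf Q K A) := {d | Relation.ReflTransGen (ZStep M) c d}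

theorem mem_rule_iff {c : ZConf Q K A} (hc : c.2 none = []) (q : Q) (a : A) (hq : q ≠ M.acc) (hq' : q ≠ M.rej)
    (z : Option K → List (A ⊕ (Q × A))) :
    (q, (ruleL M q a).foldr push z) ∈ Reach M c ↔
      ((M.dl q a).1, (ruleR M q a).foldr push z) ∈ Reach M c := by
  constructor
  · intro h
    exact Relation.ReflTransGen.tail h ⟨hq, hq', a, z, rfl, rfl⟩
  · intro h
    have hn : ((ruleR M q a).foldr push z) none = Sum.inr (q, a) :: z none := by
      rw [ruleR_foldr]; simp
    rcases Relation.ReflTransGen.cases_tail h with h | ⟨b, hb, hs⟩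
    · rw [← h] at hc
      exact absurd (hn.symm.trans hc) (List.cons_ne_nil _ _)
    · obtain ⟨a', z', h1, h2, h3⟩ := hs.hist
      obtain ⟨q1, y⟩ := b
      simp only at h1 h2 h3
      rw [hn] at h3
      simp only [List.cons.injEq, Sum.inr.injEq, Prod.mk.injEq] at h3
      obtain ⟨⟨rfl, rfl⟩, -⟩ := h3
      have := ruleR_injective _ _ (Prod.ext_iff.1 h2).2
      rw [this, ← h1]; exact hb

theorem reach_finite (hne : M.acc ≠ M.rej) {c d : ZConf Q K A} (h : Relation.ReflTransGen (ZStep M) c d)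
    (hd : d.1 = M.rej) : (Reach M c).Finite ∧ ∀ e ∈ Reach M c, e.1 ≠ M.acc := by
  induction h using Relation.ReflTransGen.head_induction_on with
  | refl =>
    have : Reach M d = {d} := by
      ext e
      constructor
      · intro h
        rcases Relation.ReflTransGen.cases_head h with h | ⟨b, hb, -⟩
        · exact h.symm
        · exact absurd hd hb.2.1
      · rintro rfl; exact Relation.ReflTransGen.refl
    rw [this]
    refine ⟨Set.finite_singleton _, ?_⟩
    rintro e rfl
    rw [hd]; exact hne.symm
  | @head a b h _ ih =>
    have : Reach M a ⊆ insert a (Reach M b) := by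
      intro e h'
      rcases Relation.ReflTransGen.cases_head h' with h' | ⟨b', hb', hb''⟩
      · exact Or.inl h'.symm
      · rw [hb'.det h] at hb''
        exact Or.inr hb''
    refine ⟨(ih.1.insert a).subset this, ?_⟩
    intro e he
    rcases this he with rfl | he
    · exact h.1
    · exact ih.2 e he

theorem reaches_aug {c d : Q × (K → List A)} (h : M.Reaches c d) :
    ∃ hs, Relation.ReflTransGen (ZStep M) (c.1, aug c.2 []) (d.1, aug d.2 hs) := by
  induction h with
  | refl => exact ⟨[], .refl⟩
  | @tail b e _ hs ih =>
    obtain ⟨hh, ih⟩ := ih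
    obtain ⟨h1, h2, a, t, h3, rfl⟩ := hs
    refine ⟨(b.1, a) :: hh, ih.tail ⟨h1, h2, a, aug (Function.update b.2 (M.kk b.1) t) hh, ?_, ?_⟩⟩
    · simp only [ruleL, List.foldr_cons, List.foldr_nil, push]
      rw [aug_update_some]
      simp only [Function.update_self, Function.update_idem]
      rw [← List.map_cons, ← h3, ← aug_update_some, Function.update_eq_self]
    · rw [ruleR_foldr, Prod.mk.injEq]
      refine ⟨rfl, ?_⟩
      funext k
      rcases k with _ | k
      · simp [aug]
      · by_cases hk : k = M.kk b.1
        · subst hk; simp [aug]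
        · simp [aug, hk]

/-- The linear data attached to a rejecting computation. -/
theorem exists_data [Finite Q] [Finite K] [Finite A] (hne : M.acc ≠ M.rej) (l : List (Option K)) (hl : l.Nodup)
    (hl' : ∀ k, k ∈ l) (n : ℕ) (hrej : ∃ S, M.Reaches (M.initCfg n) (M.rej, S)) :
    ∃ (V : Type) (_ : AddCommGroup V) (_ : Module (ZMod 2) V) (_ : Finite V)
      (T : Lett Q K A → V →ₗ[ZMod 2] V) (v : Q → V),
      (∀ s t, s.1 ≠ t.1 → ∀ x, T s (T t x) = T t (T s x)) ∧
      (∀ q a, q ≠ M.acc → q ≠ M.rej → (ruleL M q a).foldl (fun x s => T s x) (v q) =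
        (ruleR M q a).foldl (fun x s => T s x) (v (M.dl q a).1)) ∧
      v M.acc = 0 ∧ (inWord M l n).foldl (fun x s => T s x) (v M.q0) ≠ 0 := by
  classical
  obtain ⟨S, hS⟩ := hrej
  obtain ⟨hs, hrun⟩ := reaches_aug hS
  set c : ZConf Q K A := ((M.initCfg n).1, aug (M.initCfg n).2 []) with hcdef
  have hc0 : c.2 none = [] := rfl
  obtain ⟨hfin, hacc⟩ := reach_finite hne hrun rfl
  obtain ⟨B, hB⟩ : ∃ B : ℕ, ∀ d ∈ Reach M c, ∀ k, (d.2 k).length ≤ B := by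
    have : ((fun p : ZConf Q K A × Option K => (p.1.2 p.2).length) '' (Reach M c ×ˢ Set.univ)).Finite :=
      (hfin.prod Set.finite_univ).image _
    obtain ⟨B, hB⟩ := this.bddAbove
    exact ⟨B, fun d hd k => hB ⟨(d, k), ⟨hd, Set.mem_univ _⟩, rfl⟩⟩
  let D : Set (Option K → List (A ⊕ (Q × A))) := {z | ∀ k, (z k).length ≤ B}
  have hDfin : D.Finite := by
    have := Set.Finite.pi (ι := Option K) (t := fun _ => {x : List (A ⊕ (Q × A)) | x.length ≤ B})
      (fun _ => List.finite_length_le _ _)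
    refine this.subset fun z hz k _ => hz k
  have hpush : ∀ s z, push s z ∈ D → z ∈ D := by
    intro s z h k
    have := h k
    by_cases hk : k = s.1
    · subst hk
      simp [push] at this
      omega
    · simpa [push, hk] using this
  let V : Submodule (ZMod 2) ((Option K → List (A ⊕ (Q × A))) → ZMod 2) :=
    { carrier := {f | ∀ z, z ∉ D → f z = 0}
      add_mem' := fun {f g} hf hg z hz => by simp [hf z hz, hg z hz]
      zero_mem' := fun z hz => rfl
      smul_mem' := fun r f hf z hz => by simp [hf z hz] }
  have hVfin : Finite V := by
    have : Finite D := hDfin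
    refine Finite.of_injective (fun f : V => fun z : D => f.1 z.1) ?_
    intro f g h
    ext z
    by_cases hz : z ∈ D
    · exact congrFun h ⟨z, hz⟩
    · rw [f.2 z hz, g.2 z hz]
  let T : Lett Q K A → V →ₗ[ZMod 2] V := fun s =>
    (LinearMap.funLeft (ZMod 2) (ZMod 2) (push s)).restrict (p := V) (q := V)
      (fun f hf z hz => hf _ fun h => hz (hpush s z h))
  have hT : ∀ s (f : V) z, (T s f).1 z = f.1 (push s z) := fun s f z => rfl
  have hTw : ∀ (w : List (Lett Q K A)) (f : V) z, (w.foldl (fun x s => T s x) f).1 z = f.1 (w.foldr push z) := by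
    intro w
    induction w with
    | nil => intro f z; rfl
    | cons s w ih => intro f z; rw [List.foldl_cons, ih]; rfl
  let v : Q → V := fun q => ⟨fun z => if (q, z) ∈ Reach M c then 1 else 0, fun z hz => by
    exact if_neg fun h => hz fun k => hB (q, z) h k⟩
  refine ⟨V, inferInstance, inferInstance, hVfin, T, v, ?_, ?_, ?_, ?_⟩
  · intro s t hst x
    ext z
    rw [hT, hT, hT, hT, push_comm t s hst.symm]
  · intro q a h1 h2
    ext z
    rw [hTw, hTw]
    simp only [v]
    rw [mem_rule_iff hc0 q a h1 h2]
  · ext z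
    simp only [v]
    rw [if_neg]; rfl
    exact fun h => hacc _ h rfl
  · intro h
    have h1 := congrArg (fun f : V => f.1 (fun _ => [])) h
    simp only [hTw] at h1
    have : (inWord M l n).foldr push (fun _ => []) = aug (M.initCfg n).2 [] := by
      have e1 : (wordOf l (aug M.base [] : Option K → List (A ⊕ (Q × A)))).foldr push (fun _ => []) = aug M.base [] := by
        funext k
        rw [foldr_push_wordOf l hl, if_pos (hl' k), List.append_nil]
      have e2 := foldr_push_map (some M.main) (List.replicate n (Sum.inl M.a0 : A ⊕ (Q × A))) (aug M.base [])
      rw [List.map_replicate] at e2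
      rw [inWord, List.foldr_append, e1, e2, Mach.initCfg, aug_update_some]
      simp [aug]
    rw [this] at h1
    simp only [v] at h1
    rw [if_pos (show (M.q0, aug (M.initCfg n).2 []) ∈ Reach M c from Relation.ReflTransGen.refl)] at h1
    exact one_ne_zero h1

end Run
end AltUndec

namespace AltUndec
open scoped commutatorElement
/-! ### Part 5: the permutation model -/

section Tv
variable {W : Type} [AddCommGroup W] [Module (ZMod 2) W]

theorem two_zero (x : W) : x + x = 0 := by
  rw [← two_smul (ZMod 2) x, show (2 : ZMod 2) = 0 from rfl, zero_smul]

open Classical in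
/-- the transvection-like permutation `1 + N` -/
noncomputable def tv (N : W →ₗ[ZMod 2] W) : Equiv.Perm W :=
  if h : ∀ x, N (N x) = 0 then
    { toFun := fun x => x + N x
      invFun := fun x => x + N x
      left_inv := fun x => by
        show x + N x + N (x + N x) = x
        rw [map_add, h, add_zero, add_assoc, two_zero, add_zero]
      right_inv := fun x => by
        show x + N x + N (x + N x) = x
        rw [map_add, h, add_zero, add_assoc, two_zero, add_zero] }
  else 1

theorem tv_apply {N : W →ₗ[ZMod 2] W} (h : ∀ x, N (N x) = 0) (x : W) : tv N x = x + N x := by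
  rw [tv, dif_pos h]; rfl

theorem tv_symm_apply {N : W →ₗ[ZMod 2] W} (h : ∀ x, N (N x) = 0) (x : W) : (tv N)⁻¹ x = x + N x := by
  rw [tv, dif_pos h]; rfl

theorem tv_zero : tv (0 : W →ₗ[ZMod 2] W) = 1 := by
  ext x; rw [tv_apply (by simp)]; simp

theorem tv_sq {N : W →ₗ[ZMod 2] W} (h : ∀ x, N (N x) = 0) : tv N * tv N = 1 := by
  ext x
  rw [Equiv.Perm.mul_apply, tv_apply h, tv_apply h, map_add, h, add_zero, add_assoc, two_zero]
  simp

theorem tv_comm {N P : W →ₗ[ZMod 2] W} (hN : ∀ x, N (N x) = 0) (hP : ∀ x, P (P x) = 0)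
    (hNP : ∀ x, N (P x) = 0) : ⁅tv N, tv P⁆ = tv (P ∘ₗ N) := by
  ext x
  rw [commutatorElement_def]
  simp only [Equiv.Perm.mul_apply]
  rw [tv_symm_apply hP, tv_symm_apply hN, tv_apply hP, tv_apply hN, tv_apply (by simp [hNP])]
  simp only [map_add, hN, hP, hNP, LinearMap.comp_apply, add_zero]
  have h1 := two_zero (N x)
  have h2 := two_zero (P x)
  have e : x + P x + N x + (P x + P (N x)) + N x = x + P (N x) + (N x + N x) + (P x + P x) := by abel
  try rw [e, h1, h2]
  simp

theorem tv_comm_one {N P : W →ₗ[ZMod 2] W} (hN : ∀ x, N (N x) = 0) (hP : ∀ x, P (P x) = 0)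
    (hNP : ∀ x, N (P x) = 0) (hPN : ∀ x, P (N x) = 0) : ⁅tv N, tv P⁆ = 1 := by
  rw [tv_comm hN hP hNP, show P ∘ₗ N = 0 from LinearMap.ext hPN, tv_zero]

end Tv

section Model
variable {V : Type} [AddCommGroup V] [Module (ZMod 2) V]

/-- the space on which everything acts -/
abbrev WW (V : Type) := ZMod 2 × (Fin 5 → V)

/-- row operation -/
def opR (j : Fin 5) (v : V) : WW V →ₗ[ZMod 2] WW V where
  toFun p := (0, Pi.single j (p.1 • v))
  map_add' p q := by
    ext i
    · simp
    · by_cases h : i = j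
      · subst h; simp [add_smul]
      · simp [h]
  map_smul' r p := by
    ext i
    · simp
    · by_cases h : i = j
      · subst h; simp [mul_smul]
      · simp [h]

/-- column operation -/
def opC (i j : Fin 5) (T : V →ₗ[ZMod 2] V) : WW V →ₗ[ZMod 2] WW V where
  toFun p := (0, Pi.single j (T (p.2 i)))
  map_add' p q := by
    ext k
    · simp
    · by_cases h : k = j
      · subst h; simp
      · simp [h]
  map_smul' r p := by
    ext k
    · simp
    · by_cases h : k = j
      · subst h; simp
      · simp [h]

theorem opR_apply (j : Fin 5) (v : V) (p : WW V) : opR j v p = (0, Pi.single j (p.1 • v)) := rfl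
theorem opC_apply (i j : Fin 5) (T : V →ₗ[ZMod 2] V) (p : WW V) :
    opC i j T p = (0, Pi.single j (T (p.2 i))) := rfl

theorem opR_opR (j k : Fin 5) (v w : V) (p : WW V) : opR j v (opR k w p) = 0 := by
  simp [opR_apply]
theorem opR_opC (i j k : Fin 5) (v : V) (T : V →ₗ[ZMod 2] V) (p : WW V) : opR j v (opC i k T p) = 0 := by
  simp [opR_apply, opC_apply]
theorem opC_opR_ne (i j k : Fin 5) (h : i ≠ k) (v : V) (T : V →ₗ[ZMod 2] V) (p : WW V) :
    opC i j T (opR k v p) = 0 := by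
  simp [opR_apply, opC_apply, h]
theorem opC_opR (i j : Fin 5) (v : V) (T : V →ₗ[ZMod 2] V) :
    opC i j T ∘ₗ (opR i v) = opR j (T v) := by
  refine LinearMap.ext fun p => ?_
  simp [opR_apply, opC_apply]
theorem opC_opC_ne (i j k l : Fin 5) (h : i ≠ l) (S T : V →ₗ[ZMod 2] V) (p : WW V) :
    opC i j T (opC k l S p) = 0 := by
  simp [opC_apply, h]
theorem opC_opC (i j k : Fin 5) (S T : V →ₗ[ZMod 2] V) :
    opC i j T ∘ₗ (opC k i S) = opC k j (T ∘ₗ S) := by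
  refine LinearMap.ext fun p => ?_
  simp [opC_apply]

/-- the row permutations -/
noncomputable def pR (v : V) (j : Fin 5) : Equiv.Perm (WW V) := tv (opR j v)

/-- the column permutations -/
noncomputable def pC (i j : Fin 5) (T : V →ₗ[ZMod 2] V) : Equiv.Perm (WW V) :=
  if i = j then 1 else tv (opC i j T)

theorem pC_ne {i j : Fin 5} (h : i ≠ j) (T : V →ₗ[ZMod 2] V) : pC i j T = tv (opC i j T) := if_neg h

theorem pC_pC {i j k : Fin 5} (h1 : i ≠ j) (h2 : j ≠ k) (h3 : i ≠ k) (S T : V →ₗ[ZMod 2] V) :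
    ⁅pC i j S, pC j k T⁆ = pC i k (T ∘ₗ S) := by
  rw [pC_ne h1, pC_ne h2, pC_ne h3, tv_comm, opC_opC]
  · exact opC_opC_ne _ _ _ _ h1 _ _
  · exact opC_opC_ne _ _ _ _ h2 _ _
  · exact opC_opC_ne _ _ _ _ h3 _ _

theorem pC_pC_one {k l m j : Fin 5} (h1 : k ≠ l) (h2 : m ≠ j) (h3 : j ≠ k) (h4 : l ≠ m)
    (S T : V →ₗ[ZMod 2] V) : ⁅pC k l S, pC m j T⁆ = 1 := by
  rw [pC_ne h1, pC_ne h2]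
  exact tv_comm_one (opC_opC_ne _ _ _ _ h1 _ _) (opC_opC_ne _ _ _ _ h2 _ _)
    (opC_opC_ne _ _ _ _ h3.symm _ _) (opC_opC_ne _ _ _ _ h4.symm _ _)

theorem pR_pC {i j : Fin 5} (h : i ≠ j) (v : V) (T : V →ₗ[ZMod 2] V) :
    ⁅pR v i, pC i j T⁆ = pR (T v) j := by
  rw [pC_ne h, pR, tv_comm, opC_opR, pR]
  · exact opR_opR _ _ _ _
  · exact opC_opC_ne _ _ _ _ h _ _
  · exact opR_opC _ _ _ _ _

theorem pR_pC_one {j k l : Fin 5} (h : k ≠ j) (h' : k ≠ l) (v : V) (T : V →ₗ[ZMod 2] V) :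
    ⁅pR v j, pC k l T⁆ = 1 := by
  rw [pC_ne h', pR]
  exact tv_comm_one (opR_opR _ _ _ _) (opC_opC_ne _ _ _ _ h' _ _) (opR_opC _ _ _ _ _)
    (opC_opR_ne _ _ _ h _ _)

/-- the flips -/
def flip (v : V) (e : Cube) (p : WW V) : WW V :=
  (p.1 + e.1, p.2 + Pi.single 2 (e.2.1 • p.2 1) + Pi.single 0 (e.2.2 • v))

theorem flip_one (v : V) (e : Cube) (p : WW V) : (flip v e p).2 1 = p.2 1 := by
  simp [flip]

theorem flip_flip (v : V) (e e' : Cube) (p : WW V) : flip v e (flip v e' p) = flip v (e + e') p := by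
  ext i
  · simp [flip]; ring
  · simp only [flip, Prod.snd_add, Prod.fst_add, add_smul, Pi.add_apply, Pi.single_add]
    simp
    abel

theorem flip_zero (v : V) (p : WW V) : flip v 0 p = p := by
  simp [flip]

theorem exists_lam (x : V) : ∃ f : V →ₗ[ZMod 2] ZMod 2, x ≠ 0 → f x = 1 := by
  by_cases hx : x = 0
  · exact ⟨0, fun h => absurd hx h⟩
  · have : ∃ f : Module.Dual (ZMod 2) V, f x ≠ 0 := by
      by_contra h
      push Not at h
      exact hx ((Module.forall_dual_apply_eq_zero_iff (ZMod 2) x).1 h)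
    obtain ⟨f, hf⟩ := this
    exact ⟨f, fun _ => (by decide : ∀ y : ZMod 2, y ≠ 0 → y = 1) _ hf⟩

/-- a functional with value one at `x` -/
noncomputable def lam (x : V) : V →ₗ[ZMod 2] ZMod 2 := (exists_lam x).choose

theorem lam_self {x : V} (hx : x ≠ 0) : lam x x = 1 := (exists_lam x).choose_spec hx

/-- the three bits of a point -/
noncomputable def bits (v : V) (p : WW V) : Cube := (p.1, lam (p.2 1) (p.2 2), lam v (p.2 0))

theorem bits_flip {v : V} (hv : v ≠ 0) (e : Cube) (p : WW V) (hp : p.2 1 ≠ 0) :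
    bits v (flip v e p) = bits v p + e := by
  have h1 := flip_one v e p
  simp only [bits]
  rw [h1]
  ext
  · simp [flip]
  · simp [flip, lam_self hp]
  · simp [flip, lam_self hv]

open Classical in
/-- the action of `Perm Cube` -/
noncomputable def actF (v : V) (π : Equiv.Perm Cube) (p : WW V) : WW V :=
  if p.2 1 = 0 then p else flip v (π (bits v p) - bits v p) p

theorem actF_zero (v : V) (π : Equiv.Perm Cube) {p : WW V} (h : p.2 1 = 0) : actF v π p = p := if_pos h
theorem actF_ne (v : V) (π : Equiv.Perm Cube) {p : WW V} (h : p.2 1 ≠ 0) :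
    actF v π p = flip v (π (bits v p) - bits v p) p := if_neg h

theorem actF_mul {v : V} (hv : v ≠ 0) (π σ : Equiv.Perm Cube) (p : WW V) :
    actF v (π * σ) p = actF v π (actF v σ p) := by
  by_cases h : p.2 1 = 0
  · rw [actF_zero v σ h, actF_zero v _ h, actF_zero v _ h]
  · rw [actF_ne v σ h, actF_ne v _ h, actF_ne v, bits_flip hv _ _ h, flip_flip, Equiv.Perm.mul_apply]
    · congr 1
      abel_nf
    · rw [flip_one]; exact h

theorem actF_one (v : V) (p : WW V) : actF v 1 p = p := by
  by_cases h : p.2 1 = 0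
  · exact actF_zero v _ h
  · rw [actF_ne v _ h]; simp [flip_zero]

/-- the action as a homomorphism -/
noncomputable def actH {v : V} (hv : v ≠ 0) (π : Equiv.Perm Cube) : Equiv.Perm (WW V) where
  toFun := actF v π
  invFun := actF v π⁻¹
  left_inv p := by rw [← actF_mul hv, inv_mul_cancel, actF_one]
  right_inv p := by rw [← actF_mul hv, mul_inv_cancel, actF_one]

theorem actH_mul {v : V} (hv : v ≠ 0) (π σ : Equiv.Perm Cube) : actH hv (π * σ) = actH hv π * actH hv σ :=
  Equiv.ext fun p => actF_mul hv π σ p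

theorem actH_permU {v : V} (hv : v ≠ 0) : actH hv permU = pC 1 2 LinearMap.id := by
  rw [pC_ne (by decide)]
  ext1 p
  rw [tv_apply (opC_opC_ne _ _ _ _ (by decide) _ _)]
  show actF v permU p = _
  by_cases h : p.2 1 = 0
  · rw [actF_zero v _ h, opC_apply]; simp [h]
  · rw [actF_ne v _ h]
    have : permU (bits v p) - bits v p = (0, 1, 0) := by
      generalize bits v p = b
      revert b; decide
    rw [this, opC_apply]
    simp only [flip]
    ext <;> simp

theorem pR_eq_actF (v : V) (p : WW V) (h : p.2 1 ≠ 0) : pR v 0 p = actF v permW p := by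
  rw [actF_ne v _ h, pR, tv_apply (opR_opR _ _ _ _)]
  have : permW (bits v p) - bits v p = (0, 0, p.1) := by
    have : ∀ b : Cube, permW b - b = (0, 0, b.1) := by decide
    rw [this]; rfl
  rw [this, opR_apply]
  simp only [flip]
  ext <;> simp

theorem pR_one (v : V) (p : WW V) : (pR v 0 p).2 1 = p.2 1 := by
  rw [pR, tv_apply (opR_opR _ _ _ _), opR_apply]; simp

theorem actH_permW {v : V} (hv : v ≠ 0) (x : Equiv.Perm Cube) :
    pR v 0 * actH hv x * (pR v 0)⁻¹ = actH hv (permW * x * permW⁻¹) := by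
  rw [mul_inv_eq_iff_eq_mul]
  ext1 p
  show pR v 0 (actF v x p) = actF v _ (pR v 0 p)
  by_cases h : p.2 1 = 0
  · rw [actF_zero v _ h, actF_zero v _ (by rw [pR_one]; exact h)]
  · rw [pR_eq_actF v p h, pR_eq_actF v (actF v x p), ← actF_mul hv, ← actF_mul hv]
    · simp
    · rw [actF_ne v _ h, flip_one]; exact h

/-- the operator attached to a letter -/
def optT {Lt : Type} (T : Lt → V →ₗ[ZMod 2] V) : Option Lt → V →ₗ[ZMod 2] V
  | none => LinearMap.id
  | some s => T s

theorem opw_pR {Lt : Type} (T : Lt → V →ₗ[ZMod 2] V) (v : V) (w : List Lt) :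
    opw (fun i j a => pC i j (optT T a)) (pR v) w = pR (w.foldl (fun x s => T s x) v) := by
  induction w generalizing v with
  | nil => rfl
  | cons s w ih =>
    rw [opw_cons, List.foldl_cons, ← ih]
    congr 1
    funext j
    exact pR_pC ((by decide : ∀ j : Fin 5, j + 1 ≠ j) j) v (T s)

theorem model_fullRel {Q K A : Type} {M : Mach Q K A} {w : List (Lett Q K A)}
    (T : Lett Q K A → V →ₗ[ZMod 2] V) (v : Q → V)
    (h1 : ∀ s t, s.1 ≠ t.1 → ∀ x, T s (T t x) = T t (T s x))
    (h2 : ∀ q a, q ≠ M.acc → q ≠ M.rej → (ruleL M q a).foldl (fun x s => T s x) (v q) =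
        (ruleR M q a).foldl (fun x s => T s x) (v (M.dl q a).1))
    (h3 : v M.acc = 0) (h4 : w.foldl (fun x s => T s x) (v M.q0) ≠ 0) :
    FullRel M w (fun q => pR (v q)) (fun i j a => pC i j (optT T a))
      (pR (w.foldl (fun x s => T s x) (v M.q0)) 0) (fun x => actH h4 x) := by
  have hC : ColRel (Prod.fst : Lett Q K A → Option K) (fun i j a => pC i j (optT T a)) := by
    refine ⟨?_, ?_, ?_, ?_, ?_, ?_, ?_⟩
    · intro m j s h
      rw [pC_ne h]
      exact tv_sq (opC_opC_ne _ _ _ _ h _ _)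
    · intro m m' j s a b c
      exact (pC_pC a b c _ _).trans rfl
    · intro m m' j s a b c
      exact (pC_pC a b c _ _).trans rfl
    · intro k l m j a s b c d e
      exact pC_pC_one b c d e _ _
    · intro r m p j s t a b c d e f
      rw [pC_pC a e c, pC_pC b f c]
    · intro r m j s t a b c d
      rw [pC_pC a c b, pC_pC a c b]
      congr 1
      exact LinearMap.ext fun x => h1 t s d.symm x
    · intro m s
      exact if_pos rfl
  have hg : ∀ q, Good (fun i j a => pC i j (optT T a)) (pR (v q)) := by
    intro q
    refine ⟨fun j k l a h h' => pR_pC_one h h' _ _, fun m j h => pR_pC h _ _⟩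
  refine ⟨⟨hC, fun q => (hg q).g1, fun q => (hg q).g2, ?_, ?_⟩, ?_, ?_, ?_, ?_⟩
  · intro q a j hq hq'
    rw [opw_pR, opw_pR, h2 q a hq hq']
  · intro j
    show tv (opR j (v M.acc)) = 1
    rw [h3, ← tv_zero]
    congr 1
    refine LinearMap.ext fun p => ?_
    simp [opR_apply]
  · intro x y
    exact actH_mul h4 _ _
  · exact actH_permU h4
  · intro x
    exact actH_permW h4 _
  · rw [(hg M.q0).zig hC, opw_pR]

end Model

section Map

theorem FullRel.map {Q K A G H : Type} [Group G] [Group H] {M : Mach Q K A} {w : List (Lett Q K A)}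
    {row : Q → Fin 5 → G} {col : Fin 5 → Fin 5 → Option (Lett Q K A) → G} {om : G}
    {hh : alternatingGroup Cube → G} (h : FullRel M w row col om hh) (f : G →* H) :
    FullRel M w (fun q j => f (row q j)) (fun i j a => f (col i j a)) (f om) (fun x => f (hh x)) := by
  have hC : ColRel (Prod.fst : Lett Q K A → Option K) (fun i j a => f (col i j a)) := by
    have := h.mr.hC
    refine ⟨?_, ?_, ?_, ?_, ?_, ?_, ?_⟩
    · intro m j s a
      rw [← map_mul, this.c0 m j s a, map_one]
    · intro m m' j s a b c
      rw [← map_commutatorElement, this.c1 m m' j s a b c]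
    · intro m m' j s a b c
      rw [← map_commutatorElement, this.c2 m m' j s a b c]
    · intro k l m j s t a b c d
      rw [← map_commutatorElement, this.c3 k l m j s t a b c d, map_one]
    · intro r m p j s t a1 a2 a3 a4 a5 a6
      rw [← map_commutatorElement, ← map_commutatorElement, this.c4 r m p j s t a1 a2 a3 a4 a5 a6]
    · intro r m j s t a1 a2 a3 a4
      rw [← map_commutatorElement, ← map_commutatorElement, this.c5 r m j s t a1 a2 a3 a4]
    · intro m s
      rw [this.c6, map_one]
  refine ⟨⟨hC, ?_, ?_, ?_, ?_⟩, ?_, ?_, ?_, ?_⟩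
  · intro q j k l a b c
    rw [← map_commutatorElement, h.mr.g1 q j k l a b c, map_one]
  · intro q m j a
    rw [← map_commutatorElement, h.mr.g2 q m j a]
  · intro q a j b c
    rw [← map_opw, ← map_opw, h.mr.rule q a j b c]
  · intro j
    rw [h.mr.hacc, map_one]
  · intro x y
    rw [h.hm, map_mul]
  · rw [h.hu]
  · intro x
    rw [← map_inv, ← map_mul, ← map_mul, h.hw]
  · rw [h.ho, map_zig]

end Map
end AltUndec

namespace AltUndec
open scoped commutatorElement
open scoped Pointwise
/-! ### Part 6: generating the alternating groups -/

theorem perm_inv_apply {Ω : Type} (σ : Equiv.Perm Ω) (x : Ω) : σ⁻¹ (σ x) = x := σ.symm_apply_apply x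

theorem perm_apply_inv {Ω : Type} (σ : Equiv.Perm Ω) (x : Ω) : σ (σ⁻¹ x) = x := σ.apply_symm_apply x

theorem three_cycle {Ω : Type} [Fintype Ω] [DecidableEq Ω] {g h : Equiv.Perm Ω} (hg : g * g = 1) (hh : h * h = 1) (a : Ω)
    (hga : g a ≠ a) (hha : h a ≠ a) (hd : ∀ x, g x ≠ x → h x ≠ x → x = a) :
    ⁅g, h⁆ = Equiv.swap a (g a) * Equiv.swap (g a) (h a) ∧ g a ≠ h a := by
  have g2 : ∀ x, g (g x) = x := fun x => by rw [← Equiv.Perm.mul_apply, hg]; rfl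
  have h2 : ∀ x, h (h x) = x := fun x => by rw [← Equiv.Perm.mul_apply, hh]; rfl
  have e1 : h (g a) = g a := by
    by_contra hne
    exact hga (hd (g a) (by rw [g2]; exact hga.symm) hne)
  have e2 : g (h a) = h a := by
    by_contra hne
    exact hha (hd (h a) hne (by rw [h2]; exact hha.symm))
  have hne : g a ≠ h a := by
    intro e
    rw [← e, g2] at e2
    exact hga e2.symm
  refine ⟨?_, hne⟩
  ext1 x
  rw [commutatorElement_def, inv_eq_of_mul_eq_one_left hg, inv_eq_of_mul_eq_one_left hh]
  simp only [Equiv.Perm.mul_apply]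
  by_cases xa : x = a
  · subst xa
    rw [e2, h2, Equiv.swap_apply_of_ne_of_ne hga.symm hha.symm, Equiv.swap_apply_left]
  by_cases xb : x = g a
  · rw [xb, e1, g2, e2, Equiv.swap_apply_left, Equiv.swap_apply_of_ne_of_ne hha hne.symm]
  by_cases xc : x = h a
  · rw [xc, h2, e1, g2, Equiv.swap_apply_right, Equiv.swap_apply_right]
  rw [Equiv.swap_apply_of_ne_of_ne xb xc, Equiv.swap_apply_of_ne_of_ne xa xb]
  by_cases hx : h x = x
  · rw [hx]
    by_cases gx : g x = x
    · rw [gx, hx, gx]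
    · have : h (g x) = g x := by
        by_contra hc
        have := hd (g x) (by rw [g2]; exact fun e => gx e.symm) hc
        exact xb (by rw [← this, g2])
      rw [this, g2]
  · have : g (h x) = h x := by
      by_contra hc
      have := hd (h x) hc (by rw [h2]; exact fun e => hx e.symm)
      exact xc (by rw [← this, h2])
    rw [this, h2]
    by_contra hc
    exact xa (hd x hc hx)

theorem alt_le {N L c : ℕ} (hcN : c < N) (hcN' : N ≤ c + 2) (hL : 2 ≤ L) (hLc : 2 * L ≤ c)
    (G : Subgroup (Equiv.Perm (Fin N))) {g u Y : Equiv.Perm (Fin N)} (hg : g ∈ G) (hu : u ∈ G) (hY : Y ∈ G)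
    (hY1 : ∀ j : Fin N, j.1 < c → (Y j).1 = j.1 + 1) (hg2 : g * g = 1) (hgL : ∀ x, g x ≠ x → x.1 ≤ L)
    (hg0 : (g ⟨0, by omega⟩).1 = 1) (hgl : g ⟨L, by omega⟩ ≠ ⟨L, by omega⟩)
    (huL : u ⟨L + 1, by omega⟩ = ⟨L + 1, by omega⟩) (hul : (u ⟨N - 1, by omega⟩).1 ≤ L) :
    alternatingGroup (Fin N) ≤ G := by
  have hYt : ∀ t (j : Fin N), j.1 + t ≤ c → ((Y ^ t) j).1 = j.1 + t := by
    intro t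
    induction t with
    | zero => intro j _; rfl
    | succ t ih =>
      intro j hj
      rw [pow_succ', Equiv.Perm.mul_apply, hY1, ih j (by omega)]
      · omega
      · rw [ih j (by omega)]; omega
  set a : Fin N := ⟨L, by omega⟩ with ha
  set h : Equiv.Perm (Fin N) := Y ^ L * g * (Y ^ L)⁻¹ with hh
  have hhG : h ∈ G := G.mul_mem (G.mul_mem (G.pow_mem hY L) hg) (G.inv_mem (G.pow_mem hY L))
  have hh2 : h * h = 1 := by
    have : h * h = Y ^ L * (g * g) * (Y ^ L)⁻¹ := by rw [hh]; group
    rw [this, hg2]; group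
  have hY0 : (Y ^ L) ⟨0, by omega⟩ = a := Fin.ext (by rw [hYt _ _ (by simp; omega)]; simp [ha])
  have hha : (h a).1 = L + 1 := by
    rw [hh, Equiv.Perm.mul_apply, Equiv.Perm.mul_apply, ← hY0, perm_inv_apply, hYt, hg0]
    · omega
    · rw [hg0]; omega
  have hsup : ∀ x, h x ≠ x → L ≤ x.1 := by
    intro x hx
    have h1 : g ((Y ^ L)⁻¹ x) ≠ (Y ^ L)⁻¹ x := by
      intro e
      apply hx
      rw [hh, Equiv.Perm.mul_apply, Equiv.Perm.mul_apply, e, perm_apply_inv]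
    have h2 := hgL _ h1
    have h3 := hYt L ((Y ^ L)⁻¹ x) (by omega)
    rw [perm_apply_inv] at h3
    omega
  have hha' : h a ≠ a := fun e => by rw [e] at hha; simp [ha] at hha
  obtain ⟨hτ, hne⟩ := three_cycle hg2 hh2 a hgl hha' (fun x h1 h2 => Fin.ext (by
    have := hgL x h1
    have := hsup x h2
    simp only [ha]; omega))
  have hτG : ⁅g, h⁆ ∈ G := by
    rw [commutatorElement_def]
    exact G.mul_mem (G.mul_mem (G.mul_mem hg hhG) (G.inv_mem hg)) (G.inv_mem hhG)
  have h3c : Equiv.Perm.IsThreeCycle ⁅g, h⁆ := by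
    rw [hτ, Equiv.swap_comm a (g a)]
    exact Equiv.Perm.isThreeCycle_swap_mul_swap_same hgl hne (Ne.symm hha')
  have hYa : Y a = h a := Fin.ext (by rw [hha, hY1]; simp only [ha]; omega)
  -- reachability
  have hreach : ∀ x : Fin N, ∃ k ∈ G, k ⟨0, by omega⟩ = x := by
    have h1 : ∀ x : Fin N, x.1 ≤ c → ∃ k ∈ G, k ⟨0, by omega⟩ = x := by
      intro x hx
      refine ⟨Y ^ x.1, G.pow_mem hY _, Fin.ext ?_⟩
      rw [hYt _ _ (by simpa using hx)]; simp
    intro x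
    by_cases hx : x.1 ≤ c
    · exact h1 x hx
    · have : x = ⟨N - 1, by omega⟩ := Fin.ext (by simp only; omega)
      obtain ⟨k, hk, hk'⟩ := h1 (u x) (by rw [this]; omega)
      exact ⟨u⁻¹ * k, G.mul_mem (G.inv_mem hu) hk, by
        rw [Equiv.Perm.mul_apply, hk', perm_inv_apply]⟩
  haveI : MulAction.IsPretransitive G (Fin N) := by
    refine ⟨fun x y => ?_⟩
    obtain ⟨k, hk, rfl⟩ := hreach x
    obtain ⟨k', hk', rfl⟩ := hreach y
    refine ⟨⟨k' * k⁻¹, G.mul_mem hk' (G.inv_mem hk)⟩, ?_⟩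
    show (k' * k⁻¹) (k _) = _
    rw [Equiv.Perm.mul_apply, perm_inv_apply]
  have hprim : MulAction.IsPreprimitive G (Fin N) := by
    refine MulAction.IsPreprimitive.of_isTrivialBlock_base a ?_
    intro B haB hB
    have hstab : ∀ k ∈ G, ∀ x ∈ B, k x ∈ B → ∀ y, y ∈ B ↔ k y ∈ B := by
      intro k hk x hx hkx y
      have : (⟨k, hk⟩ : G) • B = B := hB.smul_eq_of_mem hx hkx
      constructor
      · intro hy
        have := Set.smul_mem_smul_set (a := (⟨k, hk⟩ : G)) hy
        rw [‹_ • B = B›] at this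
        exact this
      · intro hy
        have hy' : (⟨k, hk⟩ : G) • y ∈ B := hy
        rw [← this, Set.smul_mem_smul_set_iff] at hy'
        exact hy'
    by_cases hsub : B.Subsingleton
    · exact Or.inl hsub
    right
    obtain ⟨x, hxB, hxa⟩ : ∃ x ∈ B, x ≠ a := by
      by_contra hcon
      push Not at hcon
      exact hsub fun x hx y hy => (hcon x hx).trans (hcon y hy).symm
    have t1 : ⁅g, h⁆ a = g a := by
      rw [hτ, Equiv.Perm.mul_apply, Equiv.swap_apply_of_ne_of_ne hgl.symm hha'.symm, Equiv.swap_apply_left]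
    have t2 : ⁅g, h⁆ (g a) = h a := by
      rw [hτ, Equiv.Perm.mul_apply, Equiv.swap_apply_left, Equiv.swap_apply_of_ne_of_ne hha' hne.symm]
    have hYB : h a ∈ B := by
      by_cases hxc : x = h a
      · rw [← hxc]; exact hxB
      have key : ∀ y, y ∈ B ↔ ⁅g, h⁆ y ∈ B := by
        by_cases hxb : x = g a
        · exact hstab _ hτG a haB (by rw [t1, ← hxb]; exact hxB)
        · have : ⁅g, h⁆ x = x := by
            rw [hτ, Equiv.Perm.mul_apply, Equiv.swap_apply_of_ne_of_ne hxb hxc,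
              Equiv.swap_apply_of_ne_of_ne hxa hxb]
          exact hstab _ hτG x hxB (by rw [this]; exact hxB)
      rw [← t2, ← key, ← t1, ← key]; exact haB
    have hYs : ∀ y, y ∈ B ↔ Y y ∈ B := hstab Y hY a haB (by rw [hYa]; exact hYB)
    have hYs' : ∀ t y, y ∈ B ↔ (Y ^ t) y ∈ B := by
      intro t
      induction t with
      | zero => intro y; rfl
      | succ t ih => intro y; rw [pow_succ', Equiv.Perm.mul_apply, ← hYs, ← ih]
    have h0B : (⟨0, by omega⟩ : Fin N) ∈ B := by
      rw [hYs' L, hY0]; exact haB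
    have hcB : ∀ x : Fin N, x.1 ≤ c → x ∈ B := by
      intro x hx
      have := (hYs' x.1 ⟨0, by omega⟩).1 h0B
      have e : (Y ^ x.1) ⟨0, by omega⟩ = x := Fin.ext (by rw [hYt _ _ (by simpa using hx)]; simp)
      rwa [e] at this
    have hus : ∀ y, y ∈ B ↔ u y ∈ B := by
      have : (⟨L + 1, by omega⟩ : Fin N) ∈ B := hcB _ (by simp only; omega)
      exact hstab u hu _ this (by rw [huL]; exact this)
    refine Set.eq_univ_of_forall fun x => ?_
    by_cases hx : x.1 ≤ c
    · exact hcB x hx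
    · have : x = ⟨N - 1, by omega⟩ := Fin.ext (by simp only; omega)
      rw [hus]
      exact hcB _ (by rw [this]; omega)
  exact Equiv.Perm.alternatingGroup_le_of_isPreprimitive_of_isThreeCycle_mem hprim h3c hτG

/-- doubling a permutation -/
def dbl (W : Type) : Equiv.Perm W →* Equiv.Perm (Bool × W) where
  toFun σ := Equiv.prodCongrRight fun _ => σ
  map_one' := by ext <;> rfl
  map_mul' _ _ := by ext <;> rfl

theorem placement {P : Type} [Finite P] (g u : Equiv.Perm P) (hg : g * g = 1) (p0 p1 p2 : P)
    (h0 : g p0 ≠ p0) (h1 : g p1 ≠ p1) (h10 : p1 ≠ p0) (h10' : p1 ≠ g p0) (h2 : g p2 = p2) (h2u : u p2 ≠ p2) :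
    ∃ N0, ∀ N ≥ N0, ∃ (i : P ↪ Fin N) (Y : Equiv.Perm (Fin N)), Y ∈ alternatingGroup (Fin N) ∧
      ∀ G : Subgroup (Equiv.Perm (Fin N)), Equiv.Perm.viaEmbeddingHom i g ∈ G →
        Equiv.Perm.viaEmbeddingHom i u ∈ G → Y ∈ G → alternatingGroup (Fin N) ≤ G := by
  classical
  have := Fintype.ofFinite P
  have hp02 : p0 ≠ p2 := fun e => h0 (by rw [e, h2])
  have hp12 : p1 ≠ p2 := fun e => h1 (by rw [e, h2])
  have hg02 : g p0 ≠ p2 := fun e => hp02 (g.injective (by rw [e, h2]))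
  have hcard : 4 ≤ Fintype.card P := by
    have : ({p0, g p0, p1, p2} : Finset P).card = 4 := by
      rw [Finset.card_insert_of_notMem, Finset.card_insert_of_notMem, Finset.card_insert_of_notMem,
        Finset.card_singleton] <;> simp [*, h0.symm, h10.symm, h10'.symm]
    rw [← this]; exact Finset.card_le_univ _
  obtain ⟨L, hL⟩ : ∃ L, Fintype.card P = L + 2 := ⟨Fintype.card P - 2, by omega⟩
  refine ⟨2 * L + 5, fun N hN => ?_⟩
  let last : Fin N := ⟨N - 1, by omega⟩
  let aL : Fin N := ⟨L, by omega⟩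
  let t : Finset (Fin N) := insert last (Finset.Iic aL)
  have hlast : last ∉ Finset.Iic aL := by
    rw [Finset.mem_Iic, Fin.le_def]; simp only [last, aL]; omega
  have ht : Fintype.card P = t.card := by
    rw [Finset.card_insert_of_notMem hlast, Fin.card_Iic, hL]
  let f : P → Fin N := fun p => if p = p0 then ⟨0, by omega⟩ else if p = g p0 then ⟨1, by omega⟩ else
    if p = p1 then aL else last
  have f0 : f p0 = ⟨0, by omega⟩ := if_pos rfl
  have f1 : f (g p0) = ⟨1, by omega⟩ := by simp [f, h0]
  have f2 : f p1 = aL := by simp [f, h10, h10']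
  have f3 : f p2 = last := by simp [f, hp02.symm, hg02.symm, hp12.symm]
  obtain ⟨e, he⟩ := Finset.exists_equiv_extend_of_card_eq (α := P) ht
    (s := {p0, g p0, p1, p2}) (f := f) (by
      rintro _ hx
      simp only [Finset.mem_image, Finset.mem_insert, Finset.mem_singleton] at hx
      obtain ⟨y, hy, rfl⟩ := hx
      rcases hy with rfl | rfl | rfl | rfl
      · rw [f0]; refine Finset.mem_insert_of_mem ?_; rw [Finset.mem_Iic, Fin.le_def]; simp
      · rw [f1]; refine Finset.mem_insert_of_mem ?_; rw [Finset.mem_Iic, Fin.le_def]; simp [aL]; omega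
      · rw [f2]; refine Finset.mem_insert_of_mem ?_; rw [Finset.mem_Iic]
      · rw [f3]; exact Finset.mem_insert_self _ _) (by
      intro x hx y hy hxy
      simp only [Finset.coe_insert, Finset.coe_singleton, Set.mem_insert_iff, Set.mem_singleton_iff] at hx hy
      rcases hx with rfl | rfl | rfl | rfl <;> rcases hy with rfl | rfl | rfl | rfl <;>
      first
      | rfl
      | (exfalso
         simp only [f0, f1, f2, f3, aL, last, Fin.mk.injEq] at hxy
         omega))
  let i : P ↪ Fin N := ⟨fun p => (e p).1, fun x y h => e.injective (Subtype.ext h)⟩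
  have i0 : i p0 = ⟨0, by omega⟩ := (he p0 (by simp)).trans f0
  have i1 : i (g p0) = ⟨1, by omega⟩ := (he _ (by simp)).trans f1
  have i2 : i p1 = aL := (he _ (by simp)).trans f2
  have i3 : i p2 = last := (he _ (by simp)).trans f3
  have hit : ∀ p, i p = last ∨ (i p).1 ≤ L := by
    intro p
    have := (e p).2
    rw [Finset.mem_insert, Finset.mem_Iic] at this
    exact this.imp id (fun h => Fin.le_def.1 h)
  have hvia : ∀ σ : Equiv.Perm P, ∀ p, Equiv.Perm.viaEmbeddingHom i σ (i p) = i (σ p) := fun σ p => by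
    rw [Equiv.Perm.viaEmbeddingHom_apply, Equiv.Perm.viaEmbedding_apply]
  have hvia' : ∀ σ : Equiv.Perm P, ∀ x, x ∉ Set.range i → Equiv.Perm.viaEmbeddingHom i σ x = x := fun σ x hx => by
    rw [Equiv.Perm.viaEmbeddingHom_apply, Equiv.Perm.viaEmbedding_apply_of_notMem _ _ _ hx]
  let c := 2 * ((N - 1) / 2)
  have hcN : c < N := by simp only [c]; omega
  let Y : Equiv.Perm (Fin N) := Fin.cycleRange ⟨c, hcN⟩
  refine ⟨i, Y, ?_, ?_⟩
  · rw [Equiv.Perm.mem_alternatingGroup]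
    haveI : NeZero N := ⟨by omega⟩
    simp only [Y]
    rw [Fin.sign_cycleRange]
    simp [c, pow_mul]
  · intro G hG1 hG2 hG3
    refine alt_le (L := L) hcN (by simp only [c]; omega) (by omega) (by simp only [c]; omega) G hG1 hG2 hG3
      ?_ ?_ ?_ ?_ ?_ ?_ ?_
    · intro j hj
      exact Fin.coe_cycleRange_of_lt (by rw [Fin.lt_def]; exact hj)
    · rw [← map_mul, hg, map_one]
    · intro x hx
      by_cases hr : x ∈ Set.range i
      · obtain ⟨p, rfl⟩ := hr
        rcases hit p with h | h
        · rw [← i3] at h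
          rw [i.injective h, hvia, h2] at hx
          exact absurd rfl hx
        · exact h
      · exact absurd (hvia' g x hr) hx
    · rw [← i0, hvia, i1]
    · change _ ≠ aL
      change Equiv.Perm.viaEmbeddingHom i g aL ≠ _
      rw [← i2, hvia]
      exact fun h => h1 (i.injective h)
    · refine hvia' u _ ?_
      rintro ⟨p, hp⟩
      rcases hit p with h | h
      · rw [h] at hp
        simp only [last, Fin.mk.injEq] at hp
        omega
      · rw [hp] at h
        simp at h
    · change (Equiv.Perm.viaEmbeddingHom i u last).1 ≤ L
      rw [← i3, hvia]
      refine (hit _).resolve_left ?_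
      rw [← i3]
      exact fun h => h2u (i.injective h)

theorem via_dbl_even {W : Type} [Finite W] {N : ℕ} (i : Bool × W ↪ Fin N) (σ : Equiv.Perm W) :
    Equiv.Perm.viaEmbeddingHom i (dbl W σ) ∈ alternatingGroup (Fin N) := by
  classical
  have := Fintype.ofFinite W
  rw [Equiv.Perm.mem_alternatingGroup, Equiv.Perm.viaEmbeddingHom_apply, Equiv.Perm.viaEmbedding,
    Equiv.Perm.sign_extendDomain]
  change Equiv.Perm.sign (Equiv.prodCongrRight fun _ : Bool => σ) = 1
  rw [Equiv.Perm.sign_prodCongrRight]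
  simp

theorem reject_alt {Q K A : Type} [DecidableEq K] [Finite Q] [Finite K] [Finite A] (M : Mach Q K A)
    (hne : M.acc ≠ M.rej) (l : List (Option K)) (hl : l.Nodup)
    (hl' : ∀ k, k ∈ l) (n : ℕ) (hrej : ∃ S, M.Reaches (M.initCfg n) (M.rej, S)) :
    ∃ N0, ∀ N ≥ N0, ∃ d : Gen Q K A → alternatingGroup (Fin N),
      FullRel M (inWord M l n) (dRow d) (dCol d) (d gOm) (fun x => d (gH x)) ∧
        Subgroup.closure (Set.range d) = ⊤ := by
  obtain ⟨V, _, _, _, T, v, a1, a2, a3, a4⟩ := exists_data hne l hl hl' n hrej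
  have hR := model_fullRel T v a1 a2 a3 a4
  set vv := (inWord M l n).foldl (fun x s => T s x) (v M.q0) with hvv
  let g := pR vv 0
  let u : Equiv.Perm (WW V) := pC 1 2 LinearMap.id
  have hga : ∀ p, g p = p + opR 0 vv p := tv_apply (opR_opR _ _ _ _)
  have hua : ∀ p, u p = p + opC 1 2 LinearMap.id p := by
    intro p
    simp only [u]
    rw [pC_ne (by decide)]
    exact tv_apply (opC_opC_ne _ _ _ _ (by decide) _ _) p
  have hx0 : g (1, 0) ≠ (1, 0) := by
    rw [hga]
    intro h
    have := congrFun (congrArg Prod.snd h) 0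
    simp [opR_apply] at this
    exact a4 this
  have hx2 : g (0, Pi.single 1 vv) = (0, Pi.single 1 vv) := by
    rw [hga]; simp [opR_apply]
  have hx2u : u (0, Pi.single 1 vv) ≠ (0, Pi.single 1 vv) := by
    rw [hua]
    intro h
    have := congrFun (congrArg Prod.snd h) 2
    simp [opC_apply] at this
    exact a4 this
  obtain ⟨N0, hN0⟩ := placement (dbl (WW V) g) (dbl (WW V) u)
    (by rw [← map_mul, show g * g = 1 from tv_sq (opR_opR _ _ _ _), map_one])
    (false, (1, 0)) (true, (1, 0)) (false, (0, Pi.single 1 vv))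
    (fun h => hx0 (Prod.ext_iff.1 h).2) (fun h => hx0 (Prod.ext_iff.1 h).2)
    (fun h => Bool.noConfusion (Prod.ext_iff.1 h).1) (fun h => Bool.noConfusion (Prod.ext_iff.1 h).1)
    (Prod.ext rfl hx2) (fun h => hx2u (Prod.ext_iff.1 h).2)
  refine ⟨N0, fun N hN => ?_⟩
  obtain ⟨i, Y, hY, hgen⟩ := hN0 N hN
  let F : Equiv.Perm (WW V) →* alternatingGroup (Fin N) :=
    ((Equiv.Perm.viaEmbeddingHom i).comp (dbl (WW V))).codRestrict _ (via_dbl_even i)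
  let d : Gen Q K A → alternatingGroup (Fin N) :=
    Sum.elim (fun x => F (pR (v x.1) x.2)) (Sum.elim (fun x => F (pC x.1 x.2.1 (optT T x.2.2)))
      (Sum.elim (fun _ => ⟨Y, hY⟩) (Sum.elim (fun _ => F g) (fun x => F (actH a4 x)))))
  refine ⟨d, hR.map F, ?_⟩
  have hle := hgen ((Subgroup.closure (Set.range d)).map (alternatingGroup (Fin N)).subtype)
    ⟨F g, Subgroup.subset_closure ⟨gOm, rfl⟩, rfl⟩
    ⟨F u, Subgroup.subset_closure ⟨gCol 1 2 none, rfl⟩, rfl⟩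
    ⟨⟨Y, hY⟩, Subgroup.subset_closure ⟨gY, rfl⟩, rfl⟩
  rw [eq_top_iff]
  intro x _
  obtain ⟨y, hy, hxy⟩ := hle x.2
  have : y = x := Subtype.ext hxy
  rw [← this]; exact hy

end AltUndec

/-- Theorem 1(ii) for an infinite family of alternating groups: there is no algorithm that,
given a finite presentation, decides whether the group presented has infinitely many
quotients among the groups `Alt(n)` for `n ∈ S`. -/
theorem stmt_5 (S : Set ℕ) (hS : S.Infinite) (hS5 : ∀ n ∈ S, 5 ≤ n) :
    ¬ ComputablePred (fun p : Σ s : ℕ, List (List (Fin s × Bool)) =>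
        {n ∈ S | ∃ φ : presentedGroupOf p →* alternatingGroup (Fin n),
          Function.Surjective φ}.Infinite) := by
  intro hcomp
  obtain ⟨Q, K, A, _, _, _, _, M, hne, hM⟩ := AltUndec.exists_machine
  classical
  have := Fintype.ofFinite (Option K)
  let l : List (Option K) := Finset.univ.toList
  have hl : l.Nodup := Finset.nodup_toList _
  have hl' : ∀ k, k ∈ l := fun k => Finset.mem_toList.2 (Finset.mem_univ k)
  obtain ⟨R, hR, hRG⟩ := AltUndec.exists_reduction M l
  refine hM (ComputablePred.computable_iff.2 ?_) ?_ ?_ (p := fun n => {N ∈ S | ∃ φ : presentedGroupOf (R n) →* alternatingGroup (Fin N),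
    Function.Surjective φ}.Infinite)
  · obtain ⟨f, hf, hfe⟩ := ComputablePred.computable_iff.1 hcomp
    refine ⟨fun n => f (R n), hf.comp hR, ?_⟩
    funext n
    exact congrFun hfe (R n)
  · intro n hacc hinf
    obtain ⟨N, hNS, hN⟩ := hinf.nonempty
    obtain ⟨d, hd, hcl⟩ := (hRG n _).1 hN
    exact AltUndec.accept_no_alt M l hl hl' n hacc N (hS5 N hNS) d hd hcl
  · intro n hrej
    obtain ⟨N0, hN0⟩ := AltUndec.reject_alt M hne l hl hl' n hrej
    have : (S \ Set.Iio N0).Infinite := hS.sdiff (Set.finite_Iio N0)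
    refine this.mono ?_
    rintro N ⟨hNS, hN⟩
    exact ⟨hNS, (hRG n _).2 (hN0 N (not_lt.1 hN))⟩
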